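/- arXiv:1208.5631 — 2 statements merged into one kernel-verified Lean document; each statement's English description precedes it below -/
import Mathlib

section
/- The cardinal characteristics 𝔭 and 𝔱 are equal: the pseudo-intersection number equals the tower number. -/
open Cardinal

/-- `A ⊆* B`: almost inclusion, `A \ B` is finite. -/
def AlmostSubset (A B : Set ℕ) : Prop := (A \ B).Finite

/-- Strong finite intersection property: every finite subfamily has infinite intersection. -/
def SFIP (F : Set (Set ℕ)) : Prop :=
  ∀ S : Finset (Set ℕ), ↑S ⊆ F → (⋂₀ (↑S : Set (Set ℕ))).Infinite

/-- The family `F` has an infinite pseudo-intersection. -/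
def HasPseudoIntersection (F : Set (Set ℕ)) : Prop :=
  ∃ A : Set ℕ, A.Infinite ∧ ∀ B ∈ F, AlmostSubset A B

/-- A tower: a family of infinite sets linearly preordered by almost inclusion. -/
def IsTower (F : Set (Set ℕ)) : Prop :=
  (∀ B ∈ F, Set.Infinite B) ∧
  ∀ A ∈ F, ∀ B ∈ F, AlmostSubset A B ∨ AlmostSubset B A

/-- The pseudo-intersection number 𝔭. -/
noncomputable def pseudoIntersectionNumber : Cardinal :=
  sInf { c : Cardinal | ∃ F : Set (Set ℕ), #F = c ∧ (∀ B ∈ F, Set.Infinite B) ∧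
    SFIP F ∧ ¬ HasPseudoIntersection F }

/-- The tower number 𝔱. -/
noncomputable def towerNumber : Cardinal :=
  sInf { c : Cardinal | ∃ F : Set (Set ℕ), #F = c ∧ IsTower F ∧ ¬ HasPseudoIntersection F }

/-!
Let `F` be a family of least size `p` with the strong finite intersection property and without
pseudo-intersection, and suppose that every tower of size at most `p` has a pseudo-intersection.

Index the finite intersections of `F` as `B α`, `α < p`. Refining the `B α` one after the other must
fail at some stage, which gives a chain of `κ < p` sets that meet all `B α` in infinite sets,
although no pseudo-intersection of the chain does so. Counting the elements of these sets in finite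
windows of `ℕ` turns this into a peculiar gap: functions `a i`, `i < κ`, decreasing modulo finite
sets, and functions `b α`, `α < p`, below them such that nothing fits in between.

There is no such gap. Each `γ < κ⁺` embeds in `κ`, which provides a coloring `g` of pairs in `p` by
elements of `κ` such that every `φ : p → κ` admits `β < γ` with `φ β = φ γ < g β γ`. Recursively
construct `p` finite approximations at each `n`, the height of the `α`-th one lying between the gap,
in which the pair of the `β`-th and the `γ`-th height is labelled `a (g β γ)`. As these form a tower
on a countable set, some approximation `C` extends them all. The level up to which the `β`-th height
is active in `C` lies above all `b α`, hence above some `a (φ β)`, while no two heights may both be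
active above their label; so `φ β = φ γ` excludes `φ γ < g β γ`, a contradiction.
-/

open Filter Set

/-! ### Almost inclusion and towers -/

/-- The filter of statements true at all but finitely many elements of `A`: the formula
`∀ᶠ n in almostAll A, P n` says that `P n` holds for almost all `n ∈ A`. -/
def almostAll (A : Set ℕ) : Filter ℕ := cofinite ⊓ 𝓟 A

theorem eventually_almostAll {A : Set ℕ} {P : ℕ → Prop} :
    (∀ᶠ n in almostAll A, P n) ↔ {n ∈ A | ¬ P n}.Finite := by
  simp only [almostAll, eventually_inf_principal, eventually_cofinite, Classical.not_imp]

theorem eventually_almostAll_mem (A : Set ℕ) : ∀ᶠ n in almostAll A, n ∈ A :=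
  eventually_inf_principal.2 (Eventually.of_forall fun _ h => h)

theorem eventually_almostAll_ge (A : Set ℕ) (m : ℕ) : ∀ᶠ n in almostAll A, m ≤ n :=
  (Nat.cofinite_eq_atTop ▸ eventually_ge_atTop m).filter_mono inf_le_left

theorem neBot_almostAll {A : Set ℕ} (hA : A.Infinite) : (almostAll A).NeBot :=
  cofinite_inf_principal_neBot_iff.2 hA

theorem infinite_setOf_of_eventually_almostAll {A : Set ℕ} (hA : A.Infinite) {P : ℕ → Prop}
    (h : ∀ᶠ n in almostAll A, P n) : {n | P n}.Infinite :=
  have := neBot_almostAll hA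
  frequently_cofinite_iff_infinite.1 (h.frequently.filter_mono inf_le_left)

namespace AlmostSubset

variable {A B C : Set ℕ}

theorem iff_eventually_mem : AlmostSubset A B ↔ ∀ᶠ n in almostAll A, n ∈ B :=
  eventually_almostAll.symm

theorem eventually (h : AlmostSubset A B) {P : ℕ → Prop} (hP : ∀ᶠ n in almostAll B, P n) :
    ∀ᶠ n in almostAll A, P n :=
  hP.filter_mono (le_inf inf_le_left (le_principal_iff.2 (iff_eventually_mem.1 h)))

theorem eventually_mem (h : AlmostSubset A B) : ∀ᶠ n in almostAll A, n ∈ B :=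
  iff_eventually_mem.1 h

theorem of_subset (h : A ⊆ B) : AlmostSubset A B :=
  iff_eventually_mem.2 ((eventually_almostAll_mem A).mono fun _ hn => h hn)

theorem trans (h : AlmostSubset A B) (h' : AlmostSubset B C) : AlmostSubset A C :=
  iff_eventually_mem.2 (h.eventually h'.eventually_mem)

theorem exists_forall_ge (h : AlmostSubset A B) : ∃ m, ∀ n ∈ A, m ≤ n → n ∈ B := by
  obtain ⟨m, hm⟩ := h.bddAbove
  refine ⟨m + 1, fun n hn hmn => ?_⟩
  by_contra hnB
  exact (Nat.lt_of_succ_le hmn).not_ge (hm ⟨hn, hnB⟩)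

instance : Std.Refl AlmostSubset := ⟨fun _ => of_subset Subset.rfl⟩

theorem isChain_range {J : Type*} [LinearOrder J] {A : J → Set ℕ}
    (hA : ∀ ⦃i j⦄, i < j → AlmostSubset (A j) (A i)) : IsChain AlmostSubset (range A) := by
  rintro _ ⟨i, rfl⟩ _ ⟨j, rfl⟩ hij
  rcases lt_trichotomy i j with h | rfl | h
  · exact Or.inr (hA h)
  · exact absurd rfl hij
  · exact Or.inl (hA h)

theorem exists_lowerBound_of_finite {𝒜 : Set (Set ℕ)} (h𝒜 : IsChain AlmostSubset 𝒜)
    (hne : 𝒜.Nonempty) {S : Set (Set ℕ)} (hS : S.Finite) (hS𝒜 : S ⊆ 𝒜) :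
    ∃ A ∈ 𝒜, ∀ B ∈ S, AlmostSubset A B := by
  induction S, hS using Set.Finite.induction_on with
  | empty => exact hne.imp fun A hA => ⟨hA, by simp⟩
  | @insert C S _ _ ih =>
    obtain ⟨hC, hS⟩ := insert_subset_iff.1 hS𝒜
    obtain ⟨A, hA, hAS⟩ := ih hS
    rcases h𝒜.total hC hA with h | h
    · exact ⟨C, hC, forall_mem_insert.2 ⟨refl C, fun B hB => h.trans (hAS B hB)⟩⟩
    · exact ⟨A, hA, forall_mem_insert.2 ⟨h, hAS⟩⟩

end AlmostSubset

theorem IsTower.isChain {F : Set (Set ℕ)} (hF : IsTower F) : IsChain AlmostSubset F :=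
  fun A hA B hB _ => hF.2 A hA B hB

theorem IsTower.of_isChain {F : Set (Set ℕ)} (hF : ∀ B ∈ F, B.Infinite)
    (hchain : IsChain AlmostSubset F) : IsTower F :=
  ⟨hF, fun _ hA _ hB => hchain.total hA hB⟩

theorem IsTower.sfip {F : Set (Set ℕ)} (hF : IsTower F) : SFIP F := by
  intro S hS
  rcases F.eq_empty_or_nonempty with rfl | hne
  · simpa [subset_empty_iff.1 hS] using infinite_univ
  · obtain ⟨A, hA, hAS⟩ :=
      AlmostSubset.exists_lowerBound_of_finite hF.isChain hne S.finite_toSet hS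
    exact infinite_setOf_of_eventually_almostAll (hF.1 A hA)
      ((Finset.eventually_all S).2 fun B hB => (hAS B hB).eventually_mem)

theorem SFIP.infinite_biInter {F : Set (Set ℕ)} (hF : SFIP F) (T : Finset F) :
    (⋂ B ∈ T, (B : Set ℕ)).Infinite := by
  have h := hF (T.map (Function.Embedding.subtype _)) (by simp)
  simpa only [Finset.coe_map, sInter_image, Function.Embedding.subtype_apply,
    Finset.mem_coe] using h

namespace PseudoIntersection

/-! ### Meeting fewer than `𝔭` or fewer than `𝔱` requirements -/

/-- Every family of fewer than `p` sets with the strong finite intersection property has a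
pseudo-intersection, that is, `p ≤ 𝔭`. -/
def Saturated (p : Cardinal.{0}) : Prop :=
  ∀ F : Set (Set ℕ), SFIP F → #F < p → HasPseudoIntersection F

/-- Every tower of size at most `p` has a pseudo-intersection, that is, `p < 𝔱`. -/
def TowersBounded (p : Cardinal.{0}) : Prop :=
  ∀ F : Set (Set ℕ), IsTower F → #F ≤ p → HasPseudoIntersection F

theorem exists_transfinite_sequence {I X : Type*} [LinearOrder I] [WellFoundedLT I] [Nonempty X]
    (U : I → X → Prop) (R : I → I → X → X → Prop)
    (step : ∀ α (f : I → X), (∀ γ < α, U γ (f γ)) →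
      (∀ γ < α, ∀ β < γ, R β γ (f β) (f γ)) → ∃ x, U α x ∧ ∀ β < α, R β α (f β) x) :
    ∃ f : I → X, (∀ α, U α (f α)) ∧ ∀ ⦃β α⦄, β < α → R β α (f β) (f α) := by
  classical
  let F : (α : I) → ((β : I) → β < α → X) → X := fun α ih =>
    Classical.epsilon fun x => U α x ∧ ∀ β (hβ : β < α), R β α (ih β hβ) x
  let f : I → X := wellFounded_lt.fix F
  have hf : ∀ α, f α = Classical.epsilon fun x => U α x ∧ ∀ β < α, R β α (f β) x :=
    fun α => wellFounded_lt.fix_eq F α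
  have key : ∀ α, U α (f α) ∧ ∀ β < α, R β α (f β) (f α) := by
    intro α
    induction α using WellFoundedLT.induction with
    | ind α ih =>
      have h := step α f (fun γ hγ => (ih γ hγ).1) fun γ hγ => (ih γ hγ).2
      rw [hf α]
      exact Classical.epsilon_spec h
  exact ⟨f, fun α => (key α).1, fun β α hβ => (key α).2 β hβ⟩

theorem exists_infinite_of_hasPseudoIntersection_image {J Q : Type*} (e : Q ≃ ℕ) (C : J → Set Q)
    (h : HasPseudoIntersection (range fun j => e '' C j)) :
    ∃ D : Set Q, D.Infinite ∧ ∀ j, (D \ C j).Finite := by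
  obtain ⟨A, hA, hAC⟩ := h
  refine ⟨e ⁻¹' A, hA.preimage (by simp [e.surjective.range_eq]), fun j => ?_⟩
  have hfin := Set.Finite.preimage e.injective.injOn (hAC _ ⟨j, rfl⟩)
  rwa [preimage_sdiff, preimage_image_eq _ e.injective] at hfin

section CountableIndex

variable {p : Cardinal.{0}} {J Q : Type}

theorem Saturated.exists_infinite [Countable Q] (hp : Saturated p) (hJ : #J < p) (C : J → Set Q)
    (hC : ∀ T : Finset J, (⋂ j ∈ T, C j).Infinite) :
    ∃ D : Set Q, D.Infinite ∧ ∀ j, (D \ C j).Finite := by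
  classical
  have : Infinite Q := infinite_univ_iff.1 (by simpa using hC ∅)
  obtain ⟨e⟩ : Nonempty (Q ≃ ℕ) := nonempty_equiv_of_countable
  refine exists_infinite_of_hasPseudoIntersection_image e C (hp _ ?_ (mk_range_le.trans_lt hJ))
  intro S hS
  rw [← image_univ] at hS
  obtain ⟨T, -, rfl⟩ := Finset.subset_set_image_iff.1 hS
  have h := (hC T).image e.injective.injOn
  rw [image_iInter₂ e.bijective] at h
  simpa only [Finset.coe_image, sInter_image, Finset.mem_coe] using h

theorem TowersBounded.exists_infinite [Countable Q] [Infinite Q] [LinearOrder J]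
    (hp : TowersBounded p) (hJ : #J ≤ p) (C : J → Set Q) (hC : ∀ j, (C j).Infinite)
    (hanti : ∀ ⦃i j⦄, i < j → (C j \ C i).Finite) :
    ∃ D : Set Q, D.Infinite ∧ ∀ j, (D \ C j).Finite := by
  obtain ⟨e⟩ : Nonempty (Q ≃ ℕ) := nonempty_equiv_of_countable
  refine exists_infinite_of_hasPseudoIntersection_image e C
    (hp _ (IsTower.of_isChain ?_ (AlmostSubset.isChain_range fun i j hij => ?_))
      (mk_range_le.trans hJ))
  · rintro _ ⟨j, rfl⟩
    exact (hC j).image e.injective.injOn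
  · rw [AlmostSubset, ← image_sdiff e.injective]
    exact (hanti hij).image e

end CountableIndex

theorem exists_section_of_infinite {J Z : Type*} [Nonempty Z] {S : ℕ → Set Z}
    (hS : ∀ n, (S n).Finite) {D : Set (Σ n, S n)} (hD : D.Infinite) {P : J → ℕ → Z → Prop}
    (hP : ∀ j, (D \ {q | P j q.1 q.2}).Finite) :
    ∃ (A : Set ℕ) (z : ℕ → Z), A.Infinite ∧ (∀ n ∈ A, z n ∈ S n) ∧
      ∀ j, ∀ᶠ n in almostAll A, P j n (z n) := by
  have hz : ∀ n ∈ Sigma.fst '' D, ∃ z, ∃ h : z ∈ S n, ⟨n, z, h⟩ ∈ D := by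
    rintro _ ⟨⟨n, z, h⟩, hq, rfl⟩
    exact ⟨z, h, hq⟩
  choose! z hzS hzD using hz
  refine ⟨Sigma.fst '' D, z, fun hfin => hD (hfin.of_finite_fibers _ fun n _ => ?_), hzS,
    fun j => eventually_almostAll.2 (((hP j).image Sigma.fst).subset ?_)⟩
  · have := (hS n).to_subtype
    exact (finite_range (Sigma.mk n)).subset (by rintro ⟨_, z⟩ ⟨-, rfl⟩; exact ⟨z, rfl⟩)
  · rintro n ⟨hn, hPn⟩
    exact ⟨_, ⟨hzD n hn, hPn⟩, rfl⟩

section FiniteFibers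

variable {p : Cardinal.{0}} {J Z : Type} [Nonempty Z] {S : ℕ → Set Z}

theorem Saturated.exists_section (hp : Saturated p) (hJ : #J < p) (hS : ∀ n, (S n).Finite)
    (P : J → ℕ → Z → Prop) (hP : ∀ T : Finset J, {n | ∃ z ∈ S n, ∀ j ∈ T, P j n z}.Infinite) :
    ∃ (A : Set ℕ) (z : ℕ → Z), A.Infinite ∧ (∀ n ∈ A, z n ∈ S n) ∧
      ∀ j, ∀ᶠ n in almostAll A, P j n (z n) := by
  have := fun n => (hS n).to_subtype
  obtain ⟨D, hD, hDP⟩ := hp.exists_infinite hJ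
    (fun j => {q : Σ n, S n | P j q.1 q.2}) fun T hfin => by
      refine hP T ((hfin.image Sigma.fst).subset ?_)
      rintro n ⟨z, hz, hzT⟩
      exact ⟨⟨n, z, hz⟩, mem_iInter₂.2 hzT, rfl⟩
  exact exists_section_of_infinite hS hD hDP

theorem TowersBounded.exists_section [LinearOrder J] [Nonempty J] (hp : TowersBounded p)
    (hJ : #J ≤ p) (hS : ∀ n, (S n).Finite) (P : J → ℕ → Z → Prop)
    (hanti : ∀ ⦃i j⦄, i < j → {n | ∃ z ∈ S n, P j n z ∧ ¬ P i n z}.Finite)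
    (hP : ∀ j, {n | ∃ z ∈ S n, P j n z}.Infinite) :
    ∃ (A : Set ℕ) (z : ℕ → Z), A.Infinite ∧ (∀ n ∈ A, z n ∈ S n) ∧
      ∀ j, ∀ᶠ n in almostAll A, P j n (z n) := by
  have := fun n => (hS n).to_subtype
  have hinf : ∀ j, {q : Σ n, S n | P j q.1 q.2}.Infinite := by
    refine fun j hfin => hP j ((hfin.image Sigma.fst).subset ?_)
    rintro n ⟨z, hz, hzP⟩
    exact ⟨⟨n, z, hz⟩, hzP, rfl⟩
  have : Infinite (Σ n, S n) :=
    infinite_univ_iff.1 ((hinf (Classical.arbitrary J)).mono (subset_univ _))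
  obtain ⟨D, hD, hDP⟩ := hp.exists_infinite hJ _ hinf fun i j hij => by
    refine ((hanti hij).biUnion fun n _ => finite_range (Sigma.mk n)).subset ?_
    rintro ⟨n, z⟩ hz
    exact mem_biUnion (show n ∈ {n | _} from ⟨z, z.2, hz⟩) ⟨z, rfl⟩
  exact exists_section_of_infinite hS hD hDP

end FiniteFibers

theorem exists_sparse_subset {A : Set ℕ} (hA : A.Infinite) (f : ℕ → ℕ) :
    ∃ X ⊆ A, X.Infinite ∧ ∀ x ∈ X, ∀ y ∈ X, x < y → f x ≤ y := by
  obtain ⟨g, hgA, hg⟩ := exists_seq_of_forall_finset_exists (· ∈ A) (fun x y => x < y ∧ f x ≤ y)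
    fun s _ => by
      obtain ⟨y, hyA, hy⟩ := hA.exists_gt (s.sup fun x => max x (f x))
      refine ⟨y, hyA, fun x hx => ?_⟩
      have hxy := (Finset.le_sup (f := fun x => max x (f x)) hx).trans_lt hy
      exact ⟨(le_max_left _ _).trans_lt hxy, (le_max_right _ _).trans hxy.le⟩
  have hmono : StrictMono g := fun m n hmn => (hg m n hmn).1
  refine ⟨range g, range_subset_iff.2 hgA, infinite_range_of_injective hmono.injective, ?_⟩
  rintro _ ⟨m, rfl⟩ _ ⟨n, rfl⟩ hmn
  exact (hg m n (hmono.lt_iff_lt.1 hmn)).2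

/-- The function dominating all `f j` sends `n` to a later element of a pseudo-intersection of
sets `X j` so sparse that `f j` stays below the successor function of `X j`. -/
theorem TowersBounded.exists_dominating {p : Cardinal.{0}} (hp : TowersBounded p) {J : Type}
    (hJ : #J ≤ p) (f : J → ℕ → ℕ) :
    ∃ (A : Set ℕ) (k : ℕ → ℕ), A.Infinite ∧ ∀ j, ∀ᶠ n in almostAll A, f j n ≤ k n := by
  obtain ⟨_, _⟩ := exists_wellFoundedLT J
  obtain ⟨X, hX, hXanti⟩ := exists_transfinite_sequence
    (fun j (X : Set ℕ) => X.Infinite ∧ ∀ x ∈ X, ∀ y ∈ X, x < y → f j x ≤ y)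
    (fun _ _ X Y => AlmostSubset Y X) fun j X hX hXX => by
      obtain ⟨D, hD, hDX⟩ := hp.exists_infinite (J := Iio j) ((mk_set_le _).trans hJ)
        (fun i => X i) (fun i => (hX i i.2).1) fun i i' hi => hXX i' i'.2 i hi
      obtain ⟨Y, hYD, hY, hYf⟩ := exists_sparse_subset hD (f j)
      exact ⟨Y, ⟨hY, hYf⟩, fun i hi => (AlmostSubset.of_subset hYD).trans (hDX ⟨i, hi⟩)⟩
  obtain ⟨D, hD, hDX⟩ := hp.exists_infinite hJ X (fun j => (hX j).1) hXanti
  choose k hkD hk using hD.exists_gt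
  refine ⟨D, k, hD, fun j => ?_⟩
  obtain ⟨m, hm⟩ := AlmostSubset.exists_forall_ge (hDX j)
  filter_upwards [eventually_almostAll_mem D, eventually_almostAll_ge D m] with n hn hmn
  exact (hX j).2 n (hm n hn hmn) (k n) (hm _ (hkD n) (hmn.trans (hk n).le)) (hk n)

/-! ### An unbounded coloring -/

section Cardinality

universe u

theorem mk_le_of_forall_mk_Iio_lt {W : Type u} [LinearOrder W] [WellFoundedLT W]
    {c : Cardinal.{u}} (h : ∀ γ : W, #(Iio γ) < c) : #W ≤ c := by
  rw [← Ordinal.card_type (α := W) (· < ·)]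
  refine card_le_of_le_ord (le_of_forall_lt fun o ho => ?_)
  obtain ⟨γ, rfl⟩ := Ordinal.typein_surj (α := W) (· < ·) ho
  rw [lt_ord, Ordinal.card_typein]
  exact h γ

theorem lt_mk_setOf_mk_Iio_le {I : Type u} [LinearOrder I] [WellFoundedLT I]
    {c : Cardinal.{u}} (h : c < #I) : c < #{γ : I | #(Iio γ) ≤ c} := by
  set J := {γ : I | #(Iio γ) ≤ c}
  by_contra! hJc
  have hJuniv : ∀ γ, γ ∈ J := by
    intro γ
    induction γ using WellFoundedLT.induction with
    | ind γ ih => exact (mk_le_mk_of_subset ih).trans hJc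
  exact h.not_ge ((mk_univ.symm.trans_le (mk_le_mk_of_subset fun γ _ => hJuniv γ)).trans hJc)

/-- Each `g · γ` is injective below `γ`, so that only few `β < γ` have `g β γ` below a given
bound. -/
theorem exists_unbounded_coloring {I K : Type u} [LinearOrder I] [WellFoundedLT I] [LinearOrder K]
    (hK : ℵ₀ ≤ #K) (hseg : ∀ i : K, #(Iic i) < #K) (hKI : #K < #I) :
    ∃ g : I → I → K, ∀ φ : I → K, ∃ β γ, β < γ ∧ φ β = φ γ ∧ φ γ < g β γ := by
  have : Infinite K := infinite_iff.2 hK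
  let J : Set I := {γ | #(Iio γ) ≤ #K}
  have hg : ∀ γ ∈ J, ∃ e : I → K, InjOn e (Iio γ) := fun γ ⟨e⟩ =>
    exists_injOn_iff_injective.2 ⟨e, e.injective⟩
  choose! g hg using hg
  refine ⟨fun β γ => g γ β, fun φ => ?_⟩
  obtain ⟨i, hi⟩ := infinite_pigeonhole_card_lt (fun γ : J => φ γ) (lt_mk_setOf_mk_Iio_le hKI)
    (hK.trans (lt_mk_setOf_mk_Iio_le hKI).le)
  by_contra! hφ
  refine hi.not_ge (mk_le_of_forall_mk_Iio_lt fun γ => ?_)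
  refine lt_of_le_of_lt (mk_le_of_injective (f := fun β : Iio γ =>
    (⟨g γ.1 β.1.1, ?_⟩ : Iic i)) ?_) (hseg i)
  · exact (hφ β.1.1 γ.1 β.2 (β.1.2.trans γ.2.symm)).trans_eq γ.2
  · intro β β' h
    exact Subtype.ext (Subtype.ext (Subtype.ext (hg γ.1 γ.1.2 β.2 β'.2 (Subtype.ext_iff.1 h))))

end Cardinality

/-! ### Approximations -/

/-- A finite approximation: a height and, for each level `w` and each `x`, a set of labels. An
empty set of labels means that `x` is not active at level `w`. Members of a sequence of
approximations are identified by their heights, and the labels of a pair `(x', x)` of such heights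
bound the levels at which `x` and `x'` may both be active. -/
@[ext]
structure Approx where
  /-- The last level that carries labels. -/
  height : ℕ
  /-- The labels of `x` at level `w` form the set `label w x`. -/
  label : ℕ → ℕ → Set ℕ

namespace Approx

variable {N v w x y : ℕ} {z z' z'' c : Approx} {s : ℕ → Set ℕ}

instance : Nonempty Approx := ⟨⟨0, fun _ _ => ∅⟩⟩

/-- `x` is active at level `w` if it carries a label there. -/
def Active (z : Approx) (w x : ℕ) : Prop := (z.label w x).Nonempty

/-- The constraints on an approximation all of whose data lie below `N`; the essential one is
`le_label`. -/
structure Valid (N : ℕ) (z : Approx) : Prop where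
  height_lt : z.height < N
  active_lt : ∀ {w x}, z.Active w x → x < w
  active_le : ∀ {w x}, z.Active w x → w ≤ z.height
  label_lt : ∀ {w x y}, y ∈ z.label w x → y < N
  le_label : ∀ {w x x' y}, z.Active w x → z.Active w x' → y ∈ z.label x' x → w ≤ y

theorem finite_valid (N : ℕ) : {z : Approx | z.Valid N}.Finite := by
  have hfin : (𝒫 (Iio N ×ˢ Iio N ×ˢ Iio N : Set (ℕ × ℕ × ℕ))).Finite :=
    ((finite_Iio N).prod ((finite_Iio N).prod (finite_Iio N))).finite_subsets
  refine Finite.of_finite_image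
    (f := fun z : Approx => (z.height, {q : ℕ × ℕ × ℕ | q.2.2 ∈ z.label q.1 q.2.1}))
    (((finite_Iio N).prod hfin).subset ?_) fun z _ z' _ h => ?_
  · rintro _ ⟨z, hz, rfl⟩
    refine ⟨hz.height_lt, fun ⟨w, x, y⟩ h => ?_⟩
    have hwN := (hz.active_le ⟨y, h⟩).trans_lt hz.height_lt
    exact ⟨hwN, (hz.active_lt ⟨y, h⟩).trans hwN, hz.label_lt h⟩
  · obtain ⟨hheight, hlabel⟩ := Prod.ext_iff.1 h
    refine Approx.ext hheight (funext₂ fun w x => Set.ext fun y => ?_)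
    exact Set.ext_iff.1 hlabel (w, x, y)

/-- `z'` agrees with `z` up to the height of `z`. -/
structure Initial (z z' : Approx) : Prop where
  height_le : z.height ≤ z'.height
  eqOn : EqOn z'.label z.label (Iic z.height)

theorem Initial.refl (z : Approx) : z.Initial z := ⟨le_rfl, eqOn_refl _ _⟩

theorem Initial.trans (h : z.Initial z') (h' : z'.Initial z'') : z.Initial z'' :=
  ⟨h.height_le.trans h'.height_le,
    (h'.eqOn.mono (Iic_subset_Iic.2 h.height_le)).trans h.eqOn⟩

theorem Initial.active_iff (h : z.Initial z') (hw : w ≤ z.height) :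
    z'.Active w x ↔ z.Active w x := by
  rw [Active, Active, h.eqOn hw]

/-- `z'` is a proper extension of `z` throughout whose new levels the height of `z` is active, and
in which the pair of heights carries the label `y` only. -/
structure Link (z z' : Approx) (y : ℕ) : Prop extends Initial z z' where
  height_lt : z.height < z'.height
  label_eq : z'.label z'.height z.height = {y}
  active : ∀ {w}, z.height < w → w ≤ z'.height → z'.Active w z.height

section Graft

/-- Extend `z` to height `v` by using the labels `s` at all new levels. -/
noncomputable def graft (z : Approx) (v : ℕ) (s : ℕ → Set ℕ) : Approx where
  height := v
  label w := if w ≤ z.height then z.label w else if w ≤ v then s else fun _ => ∅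

theorem graft_label_of_le (hw : w ≤ z.height) : (z.graft v s).label w = z.label w :=
  if_pos hw

theorem graft_label_of_lt (hw : z.height < w) (hwv : w ≤ v) : (z.graft v s).label w = s :=
  (if_neg hw.not_ge).trans (if_pos hwv)

theorem initial_graft (hv : z.height ≤ v) : z.Initial (z.graft v s) :=
  ⟨hv, fun _ hw => graft_label_of_le hw⟩

theorem graft_active (h : (z.graft v s).Active w x) :
    z.Active w x ∧ w ≤ z.height ∨ z.height < w ∧ w ≤ v ∧ (s x).Nonempty := by
  rcases le_or_gt w z.height with hw | hw
  · exact Or.inl ⟨by rwa [Active, graft_label_of_le hw] at h, hw⟩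
  · by_cases hwv : w ≤ v
    · exact Or.inr ⟨hw, hwv, by rwa [Active, graft_label_of_lt hw hwv] at h⟩
    · simp [Active, graft, hw.not_ge, hwv] at h

theorem Valid.graft (hz : z.Valid N) (hv : z.height ≤ v) (hvN : v < N)
    (hs : ∀ x, (s x).Nonempty → x ≤ z.height) (hsN : ∀ x, ∀ y ∈ s x, y < N)
    (hle : ∀ x x', (s x).Nonempty → (s x').Nonempty → ∀ y ∈ z.label x' x, v ≤ y) :
    (z.graft v s).Valid N where
  height_lt := hvN
  active_lt {w x} h := by
    rcases graft_active h with ⟨h, -⟩ | ⟨hw, -, h⟩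
    · exact hz.active_lt h
    · exact (hs x h).trans_lt hw
  active_le {w x} h := by
    rcases graft_active h with ⟨-, hw⟩ | ⟨-, hw, -⟩
    · exact hw.trans hv
    · exact hw
  label_lt {w x y} h := by
    rcases graft_active ⟨y, h⟩ with ⟨-, hw⟩ | ⟨hw, hwv, -⟩
    · rw [graft_label_of_le hw] at h
      exact hz.label_lt h
    · rw [graft_label_of_lt hw hwv] at h
      exact hsN x y h
  le_label {w x x' y} h h' hy := by
    rcases graft_active h with ⟨h, hw⟩ | ⟨hw, hwv, h⟩ <;>
      rcases graft_active h' with ⟨h', hw'⟩ | ⟨hw', -, h'⟩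
    · rw [graft_label_of_le ((hz.active_lt h').le.trans hw)] at hy
      exact hz.le_label h h' hy
    · exact absurd hw hw'.not_ge
    · exact absurd hw' hw.not_ge
    · rw [graft_label_of_le (hs x' h')] at hy
      exact hwv.trans (hle x x' h h' y hy)

theorem Link.graft (hz : z.Initial z') (hact : ∀ {w}, z.height < w → w ≤ z'.height →
    z'.Active w z.height) (hv : z'.height < v) (hs : s z.height = {y}) :
    z.Link (z'.graft v s) y where
  toInitial := hz.trans (initial_graft hv.le)
  height_lt := hz.height_le.trans_lt hv
  label_eq := (congrFun (graft_label_of_lt hv le_rfl) _).trans hs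
  active {w} hw hwv := by
    rcases le_or_gt w z'.height with h | h
    · rw [Active, graft_label_of_le h]
      exact hact hw h
    · rw [Active, graft_label_of_lt (v := v) h hwv, hs]
      exact singleton_nonempty y

end Graft

/-- The new approximation extends the last one of the sequence; all heights are active at its new
levels, which is consistent because the labels already present are at least the new height. -/
theorem exists_link {J : Type*} [Finite J] [LinearOrder J] {z : J → Approx} {y : J → J → ℕ}
    {t : J → ℕ} (hvN : v < N) (hvalid : ∀ β, (z β).Valid N)
    (hlink : ∀ β γ, β < γ → (z β).Link (z γ) (y β γ)) (hlt : ∀ β, (z β).height < v)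
    (hy : ∀ β γ, v ≤ y β γ) (ht : ∀ β, t β < N) :
    ∃ z' : Approx, z'.Valid N ∧ z'.height = v ∧ ∀ β, (z β).Link z' (t β) := by
  cases isEmpty_or_nonempty J with
  | inl _ =>
    exact ⟨⟨v, fun _ _ => ∅⟩, ⟨hvN, by simp [Active], by simp [Active], by simp, by simp⟩, rfl,
      isEmptyElim⟩
  | inr _ =>
  obtain ⟨μ, hμ⟩ := Finite.exists_max (id : J → J)
  have hmono : StrictMono fun β => (z β).height := fun β γ h => (hlink β γ h).height_lt
  have hinit : ∀ β, (z β).Initial (z μ) := fun β =>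
    (hμ β).eq_or_lt.elim (fun h => congrArg z h ▸ Initial.refl _) fun h => (hlink β μ h).toInitial
  let s : ℕ → Set ℕ := fun x => {y | ∃ β, (z β).height = x ∧ t β = y}
  refine ⟨(z μ).graft v s, (hvalid μ).graft (hlt μ).le hvN ?_ ?_ ?_, rfl, fun β =>
    Link.graft (hinit β) (fun {w} hw hwμ => ?_) (hlt μ) (Set.ext fun y => ?_)⟩
  · rintro _ ⟨_, β, rfl, -⟩
    exact (hinit β).height_le
  · rintro _ _ ⟨β, -, rfl⟩
    exact ht β
  · rintro _ _ ⟨_, β, rfl, -⟩ ⟨_, γ, rfl, -⟩ y hyl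
    rw [(hinit γ).eqOn self_mem_Iic] at hyl
    have hβγ : β < γ := hmono.lt_iff_lt.1 ((hvalid γ).active_lt ⟨y, hyl⟩)
    rw [(hlink β γ hβγ).label_eq] at hyl
    exact (hy β γ).trans_eq hyl.symm
  · exact (hlink β μ (hmono.lt_iff_lt.1 (hw.trans_le hwμ))).active hw hwμ
  · simp only [s, mem_ofPred_eq, mem_singleton_iff, hmono.injective.eq_iff, exists_eq_left,
      eq_comm (b := y)]

open Classical in
/-- The last level up to which `x` is active at all levels after `x`. -/
noncomputable def reach (c : Approx) (x : ℕ) : ℕ :=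
  Nat.findGreatest (fun u => ∀ w, x < w → w ≤ u → c.Active w x) c.height

theorem le_reach (hv : v ≤ c.height) (h : ∀ w, x < w → w ≤ v → c.Active w x) :
    v ≤ c.reach x := by
  classical exact Nat.le_findGreatest hv h

theorem active_of_le_reach (hw : x < w) (hwx : w ≤ c.reach x) : c.Active w x := by
  classical
  exact Nat.findGreatest_spec (P := fun u => ∀ w, x < w → w ≤ u → c.Active w x)
    (Nat.zero_le _) (fun _ h h' => absurd (h.trans_le h') (Nat.not_lt_zero _)) w hw hwx

theorem Initial.height_le_reach (h : z.Initial c) : z.height ≤ c.reach z.height :=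
  le_reach h.height_le fun _ hw hw' => absurd hw' hw.not_ge

theorem Link.height_le_reach (h : z.Link z' y) (h' : z'.Initial c) :
    z'.height ≤ c.reach z.height :=
  le_reach h'.height_le fun _ hw hw' => (h'.active_iff hw').2 (h.active hw hw')

theorem Link.le_of_le_reach (h : z.Link z' y) (hc : c.Valid N) (h' : z'.Initial c)
    (hw : z'.height < w) (hwz : w ≤ c.reach z.height) (hwz' : w ≤ c.reach z'.height) : w ≤ y := by
  refine hc.le_label (active_of_le_reach (h.height_lt.trans hw) hwz)
    (active_of_le_reach hw hwz') ?_
  rw [h'.eqOn self_mem_Iic, h.label_eq]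
  exact mem_singleton y

end Approx

/-! ### There is no peculiar gap -/

/-- `i ↦ a i` is a strictly decreasing sequence, modulo finite sets, of functions on `E` that lie
below `N`. -/
structure IsDescending {K : Type*} [LT K] (N : ℕ → ℕ) (E : Set ℕ) (a : K → ℕ → ℕ) : Prop where
  infinite : E.Infinite
  lt_bound : ∀ i n, a i n < N n
  lt : ∀ ⦃i j⦄, i < j → ∀ᶠ n in almostAll E, a j n < a i n

/-- The functions `b α` lie below all members of the descending sequence `a`, and nothing fits
in between, not even on an infinite subset of `E`: whatever is below all `a i` is below some
`b α`. -/
structure IsPeculiarGap {I K : Type*} [LT K] (N : ℕ → ℕ) (E : Set ℕ) (a : K → ℕ → ℕ)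
    (b : I → ℕ → ℕ) : Prop extends IsDescending N E a where
  le : ∀ α i, ∀ᶠ n in almostAll E, b α n ≤ a i n
  exists_lt : ∀ A : Set ℕ, A.Infinite → AlmostSubset A E → ∀ h : ℕ → ℕ,
    (∀ i, ∀ᶠ n in almostAll A, h n ≤ a i n) → ∃ α, ∀ᶠ n in almostAll A, h n < b α n

/-- A sequence of approximations of which only the terms with index in `domain` matter; it stands
for a possibly infinite approximation, whose properties hold at almost all indices. -/
structure ApproxSeq where
  domain : Set ℕ
  term : ℕ → Approx

namespace ApproxSeq

instance : Nonempty ApproxSeq := ⟨⟨∅, fun _ => Classical.arbitrary Approx⟩⟩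

/-- `Z` is valid with respect to `N`, and its height is below every `a i`. -/
structure Below {K : Type*} (N : ℕ → ℕ) (E : Set ℕ) (a : K → ℕ → ℕ) (Z : ApproxSeq) : Prop where
  infinite : Z.domain.Infinite
  almostSubset : AlmostSubset Z.domain E
  valid : ∀ᶠ n in almostAll Z.domain, (Z.term n).Valid (N n)
  height_lt : ∀ i, ∀ᶠ n in almostAll Z.domain, (Z.term n).height < a i n

/-- `Approx.Initial` for sequences, at almost all indices. -/
structure Initial (Z Z' : ApproxSeq) : Prop where
  almostSubset : AlmostSubset Z'.domain Z.domain
  initial : ∀ᶠ n in almostAll Z'.domain, (Z.term n).Initial (Z'.term n)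

/-- `Approx.Link` for sequences, at almost all indices. -/
structure Link (Z Z' : ApproxSeq) (y : ℕ → ℕ) : Prop where
  almostSubset : AlmostSubset Z'.domain Z.domain
  link : ∀ᶠ n in almostAll Z'.domain, (Z.term n).Link (Z'.term n) (y n)

theorem Link.initial {Z Z' : ApproxSeq} {y : ℕ → ℕ} (h : Z.Link Z' y) : Z.Initial Z' :=
  ⟨h.almostSubset, h.link.mono fun _ hn => hn.toInitial⟩

section Link

variable {p : Cardinal.{0}} {J K : Type} [LinearOrder J] {N : ℕ → ℕ} {E : Set ℕ}
  {a : K → ℕ → ℕ} {b : ℕ → ℕ} {Z : J → ApproxSeq} {g : J → J → K}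

theorem exists_infinite_almostSubset_domain [Finite J] (hE : E.Infinite)
    (hZ : ∀ β, (Z β).Below N E a) (hlink : ∀ β γ, β < γ → (Z β).Link (Z γ) (a (g β γ))) :
    ∃ A : Set ℕ, A.Infinite ∧ AlmostSubset A E ∧ ∀ β, AlmostSubset A (Z β).domain := by
  cases isEmpty_or_nonempty J with
  | inl _ => exact ⟨E, hE, refl E, isEmptyElim⟩
  | inr _ =>
    obtain ⟨μ, hμ⟩ := Finite.exists_max (id : J → J)
    refine ⟨_, (hZ μ).infinite, (hZ μ).almostSubset, fun β => ?_⟩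
    rcases (hμ β).eq_or_lt with h | h
    · exact congrArg Z h ▸ refl _
    · exact (hlink β μ h).almostSubset

variable [LinearOrder K] [NoMaxOrder K] [Nonempty K]

theorem infinite_setOf_exists_link [Finite J]
    (ha : IsDescending N E a) (hb : ∀ i, ∀ᶠ n in almostAll E, b n ≤ a i n)
    (hZ : ∀ β, (Z β).Below N E a) (hlink : ∀ β γ, β < γ → (Z β).Link (Z γ) (a (g β γ)))
    (t : J → K) (S : Finset K) :
    {n | ∃ z : Approx, (n ∈ E ∧ z.Valid (N n) ∧ b n ≤ z.height) ∧
      (∀ β, n ∈ (Z β).domain ∧ ((Z β).term n).Link z (a (t β) n)) ∧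
      ∀ j ∈ S, z.height < a j n}.Infinite := by
  obtain ⟨A, hA, hAE, hAZ⟩ := exists_infinite_almostSubset_domain ha.infinite hZ hlink
  obtain ⟨m, hm⟩ := S.bddAbove
  obtain ⟨m', hm'⟩ := Finite.bddAbove_range fun q : J × J => g q.1 q.2
  obtain ⟨i, hi⟩ := exists_gt (max m m')
  have hiS : ∀ j ∈ S, j < i := fun j hj => ((hm hj).trans (le_max_left _ _)).trans_lt hi
  have hig : ∀ β γ, g β γ < i := fun β γ =>
    ((hm' (mem_range_self (β, γ))).trans (le_max_right _ _)).trans_lt hi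
  have hmem : ∀ᶠ n in almostAll A, ∀ β, n ∈ (Z β).domain :=
    eventually_all.2 fun β => (hAZ β).eventually_mem
  have hvalid : ∀ᶠ n in almostAll A, ∀ β, ((Z β).term n).Valid (N n) :=
    eventually_all.2 fun β => (hAZ β).eventually (hZ β).valid
  have hheight : ∀ᶠ n in almostAll A, ∀ β, ((Z β).term n).height < a i n :=
    eventually_all.2 fun β => (hAZ β).eventually ((hZ β).height_lt i)
  have hlinks : ∀ᶠ n in almostAll A, ∀ β γ, β < γ →
      ((Z β).term n).Link ((Z γ).term n) (a (g β γ) n) :=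
    eventually_all.2 fun β => eventually_all.2 fun γ => eventually_imp_distrib_left.2 fun h =>
      (hAZ γ).eventually (hlink β γ h).link
  have hlabel : ∀ᶠ n in almostAll A, ∀ β γ, a i n ≤ a (g β γ) n :=
    eventually_all.2 fun β => eventually_all.2 fun γ =>
      (hAE.eventually (ha.lt (hig β γ))).mono fun _ hn => hn.le
  have hS : ∀ᶠ n in almostAll A, ∀ j ∈ S, a i n < a j n :=
    (Finset.eventually_all S).2 fun j hj => hAE.eventually (ha.lt (hiS j hj))
  refine infinite_setOf_of_eventually_almostAll hA ?_
  filter_upwards [hAE.eventually_mem, hmem, hvalid, hheight, hlinks, hlabel, hS,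
    hAE.eventually (hb i)] with n hnE hnmem hnvalid hnheight hnlinks hnlabel hnS hnb
  obtain ⟨z, hz, hzi, hzl⟩ := Approx.exists_link (ha.lt_bound i n) hnvalid hnlinks hnheight
    hnlabel fun β => ha.lt_bound (t β) n
  exact ⟨z, ⟨hnE, hz, hzi ▸ hnb⟩, fun β => ⟨hnmem β, hzl β⟩, fun j hj => hzi ▸ hnS j hj⟩

theorem exists_link (hsat : Saturated p) (hp : ℵ₀ ≤ p)
    (hJ : #J < p) (hK : #K < p) (ha : IsDescending N E a)
    (hb : ∀ i, ∀ᶠ n in almostAll E, b n ≤ a i n) (hZ : ∀ β, (Z β).Below N E a)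
    (hlink : ∀ β γ, β < γ → (Z β).Link (Z γ) (a (g β γ))) (t : J → K) :
    ∃ Z' : ApproxSeq, (Z'.Below N E a ∧ ∀ᶠ n in almostAll Z'.domain, b n ≤ (Z'.term n).height) ∧
      ∀ β, (Z β).Link Z' (a (t β)) := by
  obtain ⟨A, z, hA, hzS, hzP⟩ := hsat.exists_section (J := J ⊕ K) (Z := Approx)
    (S := fun n => {z | n ∈ E ∧ z.Valid (N n) ∧ b n ≤ z.height})
    (by simpa using add_lt_of_lt hp hJ hK)
    (fun n => (Approx.finite_valid (N n)).subset fun z hz => hz.2.1)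
    (Sum.elim (fun β n z => n ∈ (Z β).domain ∧ ((Z β).term n).Link z (a (t β) n))
      fun i n z => z.height < a i n) fun T => by
        refine (infinite_setOf_exists_link (J := T.toLeft) ha hb (fun β => hZ β)
          (fun β γ h => hlink β γ h) (fun β => t β) T.toRight).mono ?_
        rintro n ⟨z, hz, hzJ, hzK⟩
        refine ⟨z, hz, ?_⟩
        rintro (β | i) hj
        · exact hzJ ⟨β, Finset.mem_toLeft.2 hj⟩
        · exact hzK i (Finset.mem_toRight.2 hj)
  have hzS' : ∀ᶠ n in almostAll A, n ∈ E ∧ (z n).Valid (N n) ∧ b n ≤ (z n).height :=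
    (eventually_almostAll_mem A).mono hzS
  refine ⟨⟨A, z⟩, ⟨⟨hA, AlmostSubset.of_subset fun n hn => (hzS n hn).1,
    hzS'.mono fun _ hn => hn.2.1, fun i => hzP (Sum.inr i)⟩, hzS'.mono fun _ hn => hn.2.2⟩,
    fun β => ⟨?_, ?_⟩⟩
  · exact AlmostSubset.iff_eventually_mem.2 ((hzP (Sum.inl β)).mono fun _ hn => hn.1)
  · exact (hzP (Sum.inl β)).mono fun _ hn => hn.2

end Link

section Sequence

variable {p : Cardinal.{0}} {I K : Type} [LinearOrder I] {N : ℕ → ℕ} {Z : I → ApproxSeq}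

theorem exists_linked_sequence [WellFoundedLT I] [LinearOrder K] [NoMaxOrder K] [Nonempty K]
    (hsat : Saturated p) (hp : ℵ₀ ≤ p) (hI : ∀ α : I, #(Iio α) < p) (hK : #K < p) {E : Set ℕ}
    {a : K → ℕ → ℕ} {b : I → ℕ → ℕ} (ha : IsDescending N E a)
    (hb : ∀ α i, ∀ᶠ n in almostAll E, b α n ≤ a i n) (g : I → I → K) :
    ∃ Z : I → ApproxSeq,
      (∀ α, (Z α).Below N E a ∧ ∀ᶠ n in almostAll (Z α).domain, b α n ≤ ((Z α).term n).height) ∧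
      ∀ ⦃β α⦄, β < α → (Z β).Link (Z α) (a (g β α)) := by
  refine exists_transfinite_sequence (fun α (Z : ApproxSeq) => Z.Below N E a ∧
    ∀ᶠ n in almostAll Z.domain, b α n ≤ (Z.term n).height)
    (fun β α Z Z' => Z.Link Z' (a (g β α))) fun α Z hZ hlink => ?_
  obtain ⟨Z', hZ', hZZ'⟩ := exists_link (J := Iio α) (g := fun β γ => g β γ) hsat hp (hI α) hK
    ha (hb α) (fun β => (hZ β β.2).1) (fun β γ h => hlink γ γ.2 β h) fun β => g β α
  exact ⟨Z', hZ', fun β hβ => hZZ' ⟨β, hβ⟩⟩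

theorem exists_limit [Nonempty I] (htow : TowersBounded p) (hI : #I ≤ p)
    (hinf : ∀ α, (Z α).domain.Infinite)
    (hvalid : ∀ α, ∀ᶠ n in almostAll (Z α).domain, ((Z α).term n).Valid (N n))
    (hinit : ∀ ⦃β α⦄, β < α → (Z β).Initial (Z α)) :
    ∃ C : ApproxSeq, C.domain.Infinite ∧ (∀ n ∈ C.domain, (C.term n).Valid (N n)) ∧
      ∀ α, (Z α).Initial C := by
  obtain ⟨A, c, hA, hcN, hc⟩ := htow.exists_section hI (fun n => Approx.finite_valid (N n))
    (fun α n c => n ∈ (Z α).domain ∧ ((Z α).term n).Initial c)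
    (fun β α h => by
      refine (eventually_almostAll.1
        ((hinit h).almostSubset.eventually_mem.and (hinit h).initial)).subset ?_
      rintro n ⟨c, -, ⟨hnα, hc⟩, hcβ⟩
      exact ⟨hnα, fun hn => hcβ ⟨hn.1, hn.2.trans hc⟩⟩)
    fun α => infinite_setOf_of_eventually_almostAll (hinf α) <| by
      filter_upwards [eventually_almostAll_mem (Z α).domain, hvalid α] with n hn hnv
      exact ⟨(Z α).term n, hnv, hn, Approx.Initial.refl _⟩
  exact ⟨⟨A, c⟩, hA, hcN, fun α => ⟨AlmostSubset.iff_eventually_mem.2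
    ((hc α).mono fun _ hn => hn.1), (hc α).mono fun _ hn => hn.2⟩⟩

variable {C : ApproxSeq} {y : I → I → ℕ → ℕ}

theorem eventually_height_le_reach (hlink : ∀ ⦃β α⦄, β < α → (Z β).Link (Z α) (y β α))
    (hC : ∀ α, (Z α).Initial C) (α β : I) :
    ∀ᶠ n in almostAll C.domain,
      ((Z α).term n).height ≤ (C.term n).reach ((Z β).term n).height := by
  rcases lt_trichotomy α β with h | rfl | h
  · filter_upwards [(hC β).initial, (hC β).almostSubset.eventually (hlink h).link] with n hn hn'
    exact hn'.height_lt.le.trans hn.height_le_reach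
  · exact (hC α).initial.mono fun n hn => hn.height_le_reach
  · filter_upwards [(hC α).initial, (hC α).almostSubset.eventually (hlink h).link] with n hn hn'
    exact hn'.height_le_reach hn

end Sequence

end ApproxSeq

theorem IsPeculiarGap.exists_le {p : Cardinal.{0}} (htow : TowersBounded p) {I K : Type}
    [LinearOrder K] [Nonempty K] (hK : #K ≤ p) {N : ℕ → ℕ} {E : Set ℕ} {a : K → ℕ → ℕ}
    {b : I → ℕ → ℕ} (hgap : IsPeculiarGap N E a b) {D : Set ℕ} (hD : AlmostSubset D E)
    {u : ℕ → ℕ} (hu : ∀ α, ∀ᶠ n in almostAll D, b α n ≤ u n) :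
    ∃ i, ∀ᶠ n in almostAll D, a i n ≤ u n := by
  by_contra! hcon
  obtain ⟨A, hA, hAu⟩ := htow.exists_infinite hK (fun i => {n ∈ D | u n < a i n})
    (fun i hfin => hcon i (eventually_almostAll.2 (by simpa using hfin)))
    fun i j hij => by
      refine (eventually_almostAll.1 (hD.eventually (hgap.lt hij))).subset ?_
      rintro n ⟨⟨hnD, hn⟩, hn'⟩
      exact ⟨hnD, fun h => hn' ⟨hnD, hn.trans h⟩⟩
  have hAD : AlmostSubset A D :=
    AlmostSubset.trans (hAu (Classical.arbitrary K)) (AlmostSubset.of_subset (sep_subset _ _))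
  obtain ⟨α, hα⟩ := hgap.exists_lt A hA (hAD.trans hD) u fun i =>
    (AlmostSubset.eventually_mem (hAu i)).mono fun _ hn => hn.2.le
  have := neBot_almostAll hA
  obtain ⟨n, hn, hn'⟩ := (hα.and (hAD.eventually (hu α))).exists
  exact hn.not_ge hn'

/-- Let `C` bound a sequence of approximations linked with labels given by an unbounded coloring
`g`. Each reach in `C` exceeds some `a (φ β)`; if `β < γ`, `φ β = φ γ < g β γ`, then both heights
are active in `C` at a level above their label. -/
theorem not_isPeculiarGap {p κ : Cardinal.{0}} (hsat : Saturated p) (htow : TowersBounded p)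
    (hκ : ℵ₀ ≤ κ) (hκp : κ < p) {N : ℕ → ℕ} {E : Set ℕ} {a : κ.ord.ToType → ℕ → ℕ}
    {b : p.ord.ToType → ℕ → ℕ} : ¬ IsPeculiarGap N E a b := by
  intro hgap
  have := Cardinal.noMaxOrder hκ
  have : Nonempty κ.ord.ToType := mk_ne_zero_iff.1 (by simpa using (aleph0_pos.trans_le hκ).ne')
  have : Nonempty p.ord.ToType := mk_ne_zero_iff.1 (by simpa using (zero_le.trans_lt hκp).ne')
  obtain ⟨g, hg⟩ := exists_unbounded_coloring (I := p.ord.ToType) (K := κ.ord.ToType)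
    (by simpa using hκ) (fun i => mk_Iic_lt i (by simp) (by simpa using hκ)) (by simpa using hκp)
  obtain ⟨Z, hZ, hlink⟩ := ApproxSeq.exists_linked_sequence hsat (hκ.trans hκp.le)
    (fun α => (mk_Iio_lt α (by simp)).trans_eq (mk_ord_toType p)) (by simpa using hκp)
    hgap.toIsDescending hgap.le g
  obtain ⟨C, hC, hCN, hZC⟩ := ApproxSeq.exists_limit htow (mk_ord_toType p).le
    (fun α => (hZ α).1.infinite) (fun α => (hZ α).1.valid) fun β α h => (hlink h).initial
  have hCE : AlmostSubset C.domain E :=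
    (hZC (Classical.arbitrary _)).almostSubset.trans (hZ (Classical.arbitrary _)).1.almostSubset
  have hreach : ∀ β, ∃ i, ∀ᶠ n in almostAll C.domain,
      a i n ≤ (C.term n).reach ((Z β).term n).height := fun β =>
    hgap.exists_le htow (by simpa using hκp.le) hCE fun α => by
      filter_upwards [(hZC α).almostSubset.eventually (hZ α).2,
        ApproxSeq.eventually_height_le_reach hlink hZC α β] with n hn hn' using hn.trans hn'
  choose φ hφ using hreach
  obtain ⟨β, γ, hβγ, hφβ, hφγ⟩ := hg φ
  have hle : ∀ᶠ n in almostAll C.domain, a (φ γ) n ≤ a (g β γ) n := by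
    filter_upwards [eventually_almostAll_mem C.domain, (hZC γ).initial, hφ γ, hφβ ▸ hφ β,
      (hZC γ).almostSubset.eventually (hlink hβγ).link,
      (hZC γ).almostSubset.eventually ((hZ γ).1.height_lt (φ γ))] with n hn hnC hnγ hnβ hnl hnh
    exact hnl.le_of_le_reach (hCN n hn) hnC hnh hnβ hnγ
  have := neBot_almostAll hC
  obtain ⟨n, hn, hn'⟩ := (hle.and (hCE.eventually (hgap.lt hφγ))).exists
  exact hn.not_gt hn'

/-! ### From a family without pseudo-intersection to a peculiar gap -/

/-- `A` meets all members of `B` in infinite sets. -/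
def IsPositive {I : Type*} (B : I → Set ℕ) (A : Set ℕ) : Prop := ∀ α, (A ∩ B α).Infinite

theorem IsPositive.infinite {I : Type*} [Nonempty I] {B : I → Set ℕ} {A : Set ℕ}
    (hA : IsPositive B A) : A.Infinite :=
  (hA (Classical.arbitrary I)).mono inter_subset_left

/-- A chain of positive sets that has no positive pseudo-intersection. -/
structure IsBadChain {I : Type*} (B : I → Set ℕ) (𝒜 : Set (Set ℕ)) : Prop where
  isChain : IsChain AlmostSubset 𝒜
  isPositive : ∀ A ∈ 𝒜, IsPositive B A
  not_isPositive : ∀ D, (∀ A ∈ 𝒜, AlmostSubset D A) → ¬ IsPositive B D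

namespace IsBadChain

variable {I : Type*} {B : I → Set ℕ} {𝒜 𝒜' : Set (Set ℕ)}

theorem of_coinitial (h : IsBadChain B 𝒜) (hsub : 𝒜' ⊆ 𝒜)
    (hco : ∀ A ∈ 𝒜, ∃ A' ∈ 𝒜', AlmostSubset A' A) : IsBadChain B 𝒜' where
  isChain := h.isChain.mono hsub
  isPositive A hA := h.isPositive A (hsub hA)
  not_isPositive D hD := h.not_isPositive D fun A hA =>
    have ⟨A', hA', hA'A⟩ := hco A hA
    (hD A' hA').trans hA'A

theorem infinite (h : IsBadChain B 𝒜) (hB : ∀ α, (B α).Infinite) : 𝒜.Infinite := by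
  intro hfin
  rcases 𝒜.eq_empty_or_nonempty with rfl | hne
  · exact h.not_isPositive univ (by simp) fun α => by simpa using hB α
  · obtain ⟨A, hA, hA𝒜⟩ :=
      AlmostSubset.exists_lowerBound_of_finite h.isChain hne hfin Subset.rfl
    exact h.not_isPositive A hA𝒜 (h.isPositive A hA)

theorem exists_strict_of_minimal (h : IsBadChain B 𝒜) (h𝒜 : ℵ₀ ≤ #𝒜)
    (hmin : ∀ 𝒜', IsBadChain B 𝒜' → #𝒜 ≤ #𝒜') :
    ∃ A : (#𝒜).ord.ToType → Set ℕ, IsBadChain B (range A) ∧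
      ∀ ⦃i j⦄, i < j → AlmostSubset (A j) (A i) ∧ ¬ AlmostSubset (A i) (A j) := by
  have hne : Nonempty 𝒜 := mk_ne_zero_iff.1 (aleph0_pos.trans_le h𝒜).ne'
  obtain ⟨x⟩ := Cardinal.eq.1 (mk_ord_toType #𝒜)
  obtain ⟨A, hAx, hA⟩ := exists_transfinite_sequence (X := 𝒜)
    (fun (i : (#𝒜).ord.ToType) A => AlmostSubset A (x i)) (fun _ _ A A' => ¬ AlmostSubset A A')
    fun i A _ _ => by
      let 𝒜' : Set (Set ℕ) := insert (x i : Set ℕ) ((fun j => (A j : Set ℕ)) '' Iio i)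
      have hsub : 𝒜' ⊆ 𝒜 := insert_subset (x i).2 (image_subset_iff.2 fun j _ => (A j).2)
      have hcard : #𝒜' < #𝒜 := mk_insert_le.trans_lt <| add_lt_of_lt h𝒜
        (mk_image_le.trans_lt ((mk_Iio_lt i (by simp)).trans_eq (mk_ord_toType _)))
        (one_lt_aleph0.trans_le h𝒜)
      obtain ⟨C, hC, hC𝒜'⟩ : ∃ C ∈ 𝒜, ∀ A' ∈ 𝒜', ¬ AlmostSubset A' C := by
        by_contra! hcon
        exact hcard.not_ge (hmin _ (h.of_coinitial hsub hcon))
      exact ⟨⟨C, hC⟩, (h.isChain.total hC (x i).2).resolve_right (hC𝒜' _ (mem_insert _ _)),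
        fun j hj => hC𝒜' _ (mem_insert_of_mem _ ⟨j, hj, rfl⟩)⟩
  refine ⟨fun i => A i, h.of_coinitial (range_subset_iff.2 fun i => (A i).2) fun C hC => ?_,
    fun i j hij => ⟨(h.isChain.total (A j).2 (A i).2).resolve_right (hA hij), hA hij⟩⟩
  exact ⟨_, mem_range_self (x.symm ⟨C, hC⟩), by simpa using hAx (x.symm ⟨C, hC⟩)⟩

theorem exists_strict (h : IsBadChain B 𝒜) (hB : ∀ α, (B α).Infinite) :
    ∃ κ : Cardinal.{0}, ℵ₀ ≤ κ ∧ κ ≤ #𝒜 ∧ ∃ A : κ.ord.ToType → Set ℕ,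
      IsBadChain B (range A) ∧
        ∀ ⦃i j⦄, i < j → AlmostSubset (A j) (A i) ∧ ¬ AlmostSubset (A i) (A j) := by
  obtain ⟨𝒜₀, h₀, hmin⟩ := exists_minimalFor_of_wellFoundedLT (IsBadChain B) (fun 𝒜 => #𝒜) ⟨𝒜, h⟩
  have hmin' : ∀ 𝒜', IsBadChain B 𝒜' → #𝒜₀ ≤ #𝒜' := fun 𝒜' h' =>
    (le_total _ _).elim id (hmin h')
  have := (h₀.infinite hB).to_subtype
  exact ⟨#𝒜₀, aleph0_le_mk 𝒜₀, hmin' 𝒜 h, h₀.exists_strict_of_minimal (aleph0_le_mk 𝒜₀) hmin'⟩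

end IsBadChain

/-- Otherwise the `B α` could be refined one after the other to a descending sequence of positive
sets, and this tower would have a pseudo-intersection. -/
theorem TowersBounded.exists_isBadChain {p : Cardinal.{0}} (htow : TowersBounded p) {I : Type}
    [LinearOrder I] [WellFoundedLT I] [Nonempty I] (hI : #I ≤ p) (hIseg : ∀ α : I, #(Iio α) < p)
    {B : I → Set ℕ} (hdir : ∀ α β, ∃ γ, B γ ⊆ B α ∩ B β)
    (hpi : ¬ HasPseudoIntersection (range B)) :
    ∃ 𝒜 : Set (Set ℕ), IsBadChain B 𝒜 ∧ #𝒜 < p := by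
  by_contra! hbad
  obtain ⟨A, hA, hanti⟩ := exists_transfinite_sequence
    (fun α (A : Set ℕ) => IsPositive B A ∧ A ⊆ B α) (fun _ _ A A' => AlmostSubset A' A)
    fun α A hA hanti => by
      obtain ⟨D, hDA, hD⟩ : ∃ D, (∀ C ∈ A '' Iio α, AlmostSubset D C) ∧ IsPositive B D := by
        by_contra! hcon
        refine (mk_image_le.trans_lt (hIseg α)).not_ge (hbad (A '' Iio α) ⟨?_, ?_, hcon⟩)
        · rw [image_eq_range]
          exact AlmostSubset.isChain_range fun β γ h => hanti γ γ.2 β h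
        · exact forall_mem_image.2 fun β hβ => (hA β hβ).1
      refine ⟨D ∩ B α, ⟨fun β => ?_, inter_subset_right⟩, fun β hβ =>
        (AlmostSubset.of_subset inter_subset_left).trans (hDA _ ⟨β, hβ, rfl⟩)⟩
      obtain ⟨γ, hγ⟩ := hdir α β
      rw [inter_assoc]
      exact (hD γ).mono (inter_subset_inter_right D hγ)
  obtain ⟨D, hD, hDA⟩ := htow.exists_infinite hI A (fun α => (hA α).1.infinite) hanti
  exact hpi ⟨D, hD, forall_mem_range.2 fun α =>
    AlmostSubset.trans (hDA α) (AlmostSubset.of_subset (hA α).2)⟩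

/-- The union of the members of `c` with at most `x` elements; if `c` is a chain of finite sets,
this is its largest such member. -/
def level (c : Set (Set ℕ)) (x : ℕ) : Set ℕ := ⋃₀ {s ∈ c | s.ncard ≤ x}

theorem level_mono (c : Set (Set ℕ)) : Monotone (level c) :=
  fun _ _ h => sUnion_subset_sUnion fun _ hs => ⟨hs.1, hs.2.trans h⟩

theorem level_subset {c : Set (Set ℕ)} {W : Set ℕ} (hc : ∀ s ∈ c, s ⊆ W) (x : ℕ) :
    level c x ⊆ W :=
  sUnion_subset fun s hs => hc s hs.1

theorem level_ncard {c : Set (Set ℕ)} (hc : IsChain (· ⊆ ·) c) (hfin : ∀ s ∈ c, s.Finite)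
    {s : Set ℕ} (hs : s ∈ c) : level c s.ncard = s := by
  refine Subset.antisymm (sUnion_subset fun s' hs' => ?_) (subset_sUnion_of_mem ⟨hs, le_rfl⟩)
  rcases hc.total hs hs'.1 with h | h
  · exact (eq_of_subset_of_ncard_le h hs'.2 (hfin _ hs'.1)).symm.subset
  · exact h

/-- The number of elements of `A` in the window `[n, k n]`. -/
noncomputable def windowCard (k : ℕ → ℕ) (A : Set ℕ) (n : ℕ) : ℕ := (A ∩ Icc n (k n)).ncard

/-- The least `x` such that the level of size `x` of the chain `c n` meets `A`; meaningful only if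
some level does. -/
noncomputable def hittingLevel (c : ℕ → Set (Set ℕ)) (A : Set ℕ) (n : ℕ) : ℕ :=
  sInf {x | (level (c n) x ∩ A).Nonempty}

/-- For almost all `n ∈ E`, the traces of the sets `A i` on the window `[n, k n]` belong to the
chain `c n` of subsets of this window, the traces are strictly decreasing in `i`, and they meet all
`B α`. -/
structure IsWindowedChain {I K : Type*} [LT K] (A : K → Set ℕ) (B : I → Set ℕ) (E : Set ℕ)
    (k : ℕ → ℕ) (c : ℕ → Set (Set ℕ)) : Prop where
  infinite : E.Infinite
  subset_Icc : ∀ n ∈ E, ∀ s ∈ c n, s ⊆ Icc n (k n)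
  isChain : ∀ n ∈ E, IsChain (· ⊆ ·) (c n)
  mem : ∀ i, ∀ᶠ n in almostAll E, A i ∩ Icc n (k n) ∈ c n
  ssubset : ∀ ⦃i j⦄, i < j → ∀ᶠ n in almostAll E, A j ∩ Icc n (k n) ⊂ A i ∩ Icc n (k n)
  meet : ∀ i α, ∀ᶠ n in almostAll E, ((A i ∩ B α) ∩ Icc n (k n)).Nonempty

theorem eventually_inter_Icc_subset {A B : Set ℕ} (h : AlmostSubset A B) (E : Set ℕ)
    (k : ℕ → ℕ) : ∀ᶠ n in almostAll E, A ∩ Icc n (k n) ⊆ B ∩ Icc n (k n) := by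
  obtain ⟨m, hm⟩ := h.exists_forall_ge
  exact (eventually_almostAll_ge E m).mono fun n hn x hx => ⟨hm x hx.1 (hn.trans hx.2.1), hx.2⟩

theorem TowersBounded.exists_windows {p : Cardinal.{0}} (htow : TowersBounded p) {J : Type}
    (hJ : #J ≤ p) {C : J → Set ℕ} (hC : ∀ j, (C j).Infinite) :
    ∃ (E : Set ℕ) (k : ℕ → ℕ), E.Infinite ∧
      ∀ j, ∀ᶠ n in almostAll E, (C j ∩ Icc n (k n)).Nonempty := by
  choose f hfC hf using fun j => (hC j).exists_gt
  obtain ⟨E, k, hE, hk⟩ := htow.exists_dominating hJ f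
  exact ⟨E, k, hE, fun j => (hk j).mono fun n hn => ⟨f j n, hfC j n, (hf j n).le, hn⟩⟩

theorem Saturated.exists_chains {p : Cardinal.{0}} (hsat : Saturated p) {K : Type}
    [LinearOrder K] (hK : #K < p) {A : K → Set ℕ}
    (hA : ∀ ⦃i j⦄, i < j → AlmostSubset (A j) (A i)) {E₀ : Set ℕ} (hE₀ : E₀.Infinite) (k : ℕ → ℕ) :
    ∃ (E : Set ℕ) (c : ℕ → Set (Set ℕ)), E.Infinite ∧ E ⊆ E₀ ∧
      (∀ n ∈ E, (∀ s ∈ c n, s ⊆ Icc n (k n)) ∧ IsChain (· ⊆ ·) (c n)) ∧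
      ∀ i, ∀ᶠ n in almostAll E, A i ∩ Icc n (k n) ∈ c n := by
  obtain ⟨E, c, hE, hcS, hc⟩ := hsat.exists_section (Z := Set (Set ℕ)) hK
    (S := fun n => {c | n ∈ E₀ ∧ (∀ s ∈ c, s ⊆ Icc n (k n)) ∧ IsChain (· ⊆ ·) c})
    (fun n => (finite_Icc n (k n)).finite_subsets.finite_subsets.subset fun c hc => hc.2.1)
    (fun i n c => A i ∩ Icc n (k n) ∈ c) fun T => by
      have hT : ∀ᶠ n in almostAll E₀, ∀ i j : T, i < j →
          A j ∩ Icc n (k n) ⊆ A i ∩ Icc n (k n) :=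
        eventually_all.2 fun i => eventually_all.2 fun j =>
          eventually_imp_distrib_left.2 fun hij => eventually_inter_Icc_subset (hA hij) E₀ k
      refine infinite_setOf_of_eventually_almostAll hE₀ ?_
      filter_upwards [eventually_almostAll_mem E₀, hT] with n hn hnT
      refine ⟨range fun i : T => A i ∩ Icc n (k n),
        ⟨hn, forall_mem_range.2 fun i => inter_subset_right, ?_⟩, fun i hi => ⟨⟨i, hi⟩, rfl⟩⟩
      have hanti : Antitone fun i : T => A i ∩ Icc n (k n) := fun i j hij =>
        hij.eq_or_lt.elim (fun h => h ▸ Subset.rfl) (hnT i j)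
      exact hanti.isChain_range
  exact ⟨E, c, hE, fun n hn => (hcS n hn).1, fun n hn => (hcS n hn).2, hc⟩

theorem exists_isWindowedChain {p : Cardinal.{0}} (hsat : Saturated p) (htow : TowersBounded p)
    (hp : ℵ₀ ≤ p) {I K : Type} [LinearOrder K] (hI : #I ≤ p) (hK : #K < p) {A : K → Set ℕ}
    {B : I → Set ℕ} (hpos : ∀ i, IsPositive B (A i))
    (hA : ∀ ⦃i j⦄, i < j → AlmostSubset (A j) (A i) ∧ ¬ AlmostSubset (A i) (A j)) :
    ∃ (E : Set ℕ) (k : ℕ → ℕ) (c : ℕ → Set (Set ℕ)), IsWindowedChain A B E k c := by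
  obtain ⟨E₀, k, hE₀, hk⟩ := htow.exists_windows (J := {q : K × K // q.1 < q.2} ⊕ K × I)
    (C := Sum.elim (fun q => A q.1.1 \ A q.1.2) fun q => A q.1 ∩ B q.2)
    (by
      simp only [mk_sum, mk_prod, lift_id]
      exact add_le_of_le hp ((mk_subtype_le _).trans (mul_le_of_le hp hK.le hK.le))
        (mul_le_of_le hp hK.le hI))
    (Sum.rec (fun q => (hA q.2).2) fun q => hpos q.1 q.2)
  obtain ⟨E, c, hE, hEE₀, hc, hmem⟩ := hsat.exists_chains hK (fun i j h => (hA h).1) hE₀ k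
  have hEE₀ := AlmostSubset.of_subset hEE₀
  refine ⟨E, k, c, hE, fun n hn => (hc n hn).1, fun n hn => (hc n hn).2, hmem, fun i j hij => ?_,
    fun i α => hEE₀.eventually (hk (Sum.inr (i, α)))⟩
  filter_upwards [eventually_inter_Icc_subset (hA hij).1 E k,
    hEE₀.eventually (hk (Sum.inl ⟨(i, j), hij⟩))] with n hsub ⟨x, ⟨hxi, hxj⟩, hx⟩
  exact (ssubset_iff_of_subset hsub).2 ⟨x, ⟨hxi, hx⟩, fun h => hxj h.1⟩

namespace IsWindowedChain

variable {I K : Type*} [LT K] {A : K → Set ℕ} {B : I → Set ℕ} {E : Set ℕ} {k : ℕ → ℕ}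
  {c : ℕ → Set (Set ℕ)}

theorem eventually_level_windowCard (h : IsWindowedChain A B E k c) (i : K) :
    ∀ᶠ n in almostAll E, level (c n) (windowCard k (A i) n) = A i ∩ Icc n (k n) := by
  filter_upwards [eventually_almostAll_mem E, h.mem i] with n hn hni
  exact level_ncard (h.isChain n hn)
    (fun s hs => (finite_Icc _ _).subset (h.subset_Icc n hn s hs)) hni

theorem eventually_level_inter_nonempty (h : IsWindowedChain A B E k c) (i : K) (α : I) :
    ∀ᶠ n in almostAll E, (level (c n) (windowCard k (A i) n) ∩ B α).Nonempty := by
  filter_upwards [h.eventually_level_windowCard i, h.meet i α] with n hn ⟨x, ⟨hxA, hxB⟩, hx⟩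
  exact ⟨x, hn ▸ ⟨hxA, hx⟩, hxB⟩

theorem isDescending (h : IsWindowedChain A B E k c) :
    IsDescending (fun n => (Icc n (k n)).ncard + 1) E fun i => windowCard k (A i) where
  infinite := h.infinite
  lt_bound _ n := Nat.lt_succ_of_le (ncard_le_ncard inter_subset_right (finite_Icc n (k n)))
  lt _ _ hij := (h.ssubset hij).mono fun n hn =>
    ncard_lt_ncard hn ((finite_Icc n (k n)).subset inter_subset_right)

theorem iUnion_level_almostSubset (h : IsWindowedChain A B E k c) {D : Set ℕ} (hDE : D ⊆ E)
    {f : ℕ → ℕ} {i : K} (hf : ∀ᶠ n in almostAll D, f n ≤ windowCard k (A i) n) :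
    AlmostSubset (⋃ n ∈ D, level (c n) (f n)) (A i) := by
  have hsub : ∀ᶠ n in almostAll D, level (c n) (f n) ⊆ A i := by
    filter_upwards [hf, (AlmostSubset.of_subset hDE).eventually (h.eventually_level_windowCard i)]
      with n hn hn'
    exact (level_mono _ hn).trans (hn'.subset.trans inter_subset_left)
  refine ((eventually_almostAll.1 hsub).biUnion fun n hn =>
    (finite_Icc n (k n)).subset (level_subset (h.subset_Icc n (hDE hn.1)) (f n))).subset ?_
  rintro x ⟨hxD, hxA⟩
  obtain ⟨n, hn, hx⟩ := mem_iUnion₂.1 hxD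
  exact mem_biUnion (show n ∈ _ from ⟨hn, fun hs => hxA (hs hx)⟩) hx

theorem eventually_lt_hittingLevel [Nonempty K] (h : IsWindowedChain A B E k c) {D : Set ℕ}
    (hDE : D ⊆ E) {f : ℕ → ℕ} {α : I} (hfin : ((⋃ n ∈ D, level (c n) (f n)) ∩ B α).Finite) :
    ∀ᶠ n in almostAll D, f n < hittingLevel c (B α) n := by
  obtain ⟨m, hm⟩ := hfin.bddAbove
  filter_upwards [eventually_almostAll_mem D, eventually_almostAll_ge D (m + 1),
    (AlmostSubset.of_subset hDE).eventually
      (h.eventually_level_inter_nonempty (Classical.arbitrary K) α)] with n hn hmn hne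
  by_contra! hle
  obtain ⟨x, hx, hxB⟩ := Nat.sInf_mem (s := {x | (level (c n) x ∩ B α).Nonempty}) ⟨_, hne⟩
  have hxf : x ∈ level (c n) (f n) := level_mono (c n) hle hx
  have hxm : x ≤ m := hm ⟨mem_biUnion hn hxf, hxB⟩
  have hnx : n ≤ x := (level_subset (h.subset_Icc n (hDE hn)) _ hxf).1
  omega

/-- If `f` lies below all `windowCard k (A i)`, then the union of the levels `f n` is a
pseudo-intersection of the bad chain, hence almost disjoint from some `B α`. -/
theorem isPeculiarGap [Nonempty K] (h : IsWindowedChain A B E k c)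
    (hbad : IsBadChain B (range A)) :
    IsPeculiarGap (fun n => (Icc n (k n)).ncard + 1) E (fun i => windowCard k (A i))
      fun α => hittingLevel c (B α) where
  toIsDescending := h.isDescending
  le α i := (h.eventually_level_inter_nonempty i α).mono fun _ hn => Nat.sInf_le hn
  exists_lt D _ hDE f hf := by
    have hDD : AlmostSubset D (D ∩ E) := AlmostSubset.iff_eventually_mem.2
      ((eventually_almostAll_mem D).and hDE.eventually_mem)
    have hnot := hbad.not_isPositive (⋃ n ∈ D ∩ E, level (c n) (f n)) <|
      forall_mem_range.2 fun i => h.iUnion_level_almostSubset inter_subset_right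
        ((AlmostSubset.of_subset inter_subset_left).eventually (hf i))
    obtain ⟨α, hα⟩ := not_forall.1 hnot
    exact ⟨α, hDD.eventually (h.eventually_lt_hittingLevel inter_subset_right (not_not.1 hα))⟩

end IsWindowedChain

theorem hasPseudoIntersection_of_directed {p : Cardinal.{0}} (hsat : Saturated p)
    (htow : TowersBounded p) {B : p.ord.ToType → Set ℕ} (hB : ∀ α, (B α).Infinite)
    (hdir : ∀ α β, ∃ γ, B γ ⊆ B α ∩ B β) : HasPseudoIntersection (range B) := by
  cases isEmpty_or_nonempty p.ord.ToType with
  | inl _ => exact ⟨univ, infinite_univ, by simp⟩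
  | inr _ =>
  by_contra hpi
  obtain ⟨𝒜, h𝒜, h𝒜p⟩ := htow.exists_isBadChain (mk_ord_toType p).le
    (fun α => (mk_Iio_lt α (by simp)).trans_eq (mk_ord_toType p)) hdir hpi
  obtain ⟨κ, hκ, hκ𝒜, A, hbad, hA⟩ := h𝒜.exists_strict hB
  have hκp : κ < p := hκ𝒜.trans_lt h𝒜p
  have : Nonempty κ.ord.ToType := mk_ne_zero_iff.1 (by simpa using (aleph0_pos.trans_le hκ).ne')
  obtain ⟨E, k, c, h⟩ := exists_isWindowedChain hsat htow (hκ.trans hκp.le) (mk_ord_toType p).le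
    (by simpa using hκp) (fun i => hbad.isPositive _ (mem_range_self i)) hA
  exact not_isPeculiarGap hsat htow hκ hκp (h.isPeculiarGap hbad)

theorem hasPseudoIntersection_of_mk_eq {p : Cardinal.{0}} (hsat : Saturated p)
    (htow : TowersBounded p) {F : Set (Set ℕ)} (hF : SFIP F) (hFp : #F = p) :
    HasPseudoIntersection F := by
  classical
  rcases F.finite_or_infinite with hfin | hinf
  · exact ⟨_, hF hfin.toFinset (by simp), fun B hB =>
      AlmostSubset.of_subset (sInter_subset_of_mem (by simpa using hB))⟩
  have := hinf.to_subtype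
  obtain ⟨e⟩ := Cardinal.eq.1
    ((mk_ord_toType p).trans (hFp.symm.trans (mk_finset_of_infinite F).symm))
  obtain ⟨A, hA, hAB⟩ := hasPseudoIntersection_of_directed hsat htow
    (B := fun α => ⋂ B ∈ e α, (B : Set ℕ)) (fun α => hF.infinite_biInter (e α)) fun α β =>
      ⟨e.symm (e α ∪ e β), by
        rw [e.apply_symm_apply]
        exact subset_inter (biInter_subset_biInter_left fun _ h => Finset.mem_union_left _ h)
          (biInter_subset_biInter_left fun _ h => Finset.mem_union_right _ h)⟩
  refine ⟨A, hA, fun B hB => ?_⟩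
  simpa using hAB _ (mem_range_self (e.symm {⟨B, hB⟩}))

theorem exists_isTower_mk_le {F : Set (Set ℕ)} (hF : SFIP F) (hpi : ¬ HasPseudoIntersection F) :
    ∃ T : Set (Set ℕ), IsTower T ∧ ¬ HasPseudoIntersection T ∧ #T ≤ #F := by
  obtain ⟨G, ⟨hG, hGpi⟩, hmin⟩ := exists_minimalFor_of_wellFoundedLT
    (fun G : Set (Set ℕ) => SFIP G ∧ ¬ HasPseudoIntersection G) (fun G => #G) ⟨F, hF, hpi⟩
  have hsat : Saturated #G := fun H hH hHG => by
    by_contra hHpi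
    exact hHG.not_ge (hmin ⟨hH, hHpi⟩ hHG.le)
  have htow : ¬ TowersBounded #G := fun htow =>
    hGpi (hasPseudoIntersection_of_mk_eq hsat htow hG rfl)
  simp only [TowersBounded, not_forall] at htow
  obtain ⟨T, hT, hTG, hTpi⟩ := htow
  exact ⟨T, hT, hTpi, hTG.trans ((le_total #G #F).elim id (hmin ⟨hF, hpi⟩))⟩

end PseudoIntersection

open PseudoIntersection

/-- Malliaris–Shelah: 𝔭 = 𝔱. -/
theorem p_eq_t : pseudoIntersectionNumber = towerNumber := by
  refine csInf_eq_csInf_of_forall_exists_le ?_ ?_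
  · rintro _ ⟨F, rfl, -, hF, hpi⟩
    obtain ⟨T, hT, hTpi, hTF⟩ := exists_isTower_mk_le hF hpi
    exact ⟨#T, ⟨T, rfl, hT, hTpi⟩, hTF⟩
  · rintro _ ⟨T, rfl, hT, hpi⟩
    exact ⟨#T, ⟨T, rfl, hT.1, hT.sfip, hpi⟩, le_rfl⟩
end

section
/- The additivity number of the σ-ideal of Lebesgue null sets is at most the additivity number of the σ-ideal of meager sets: add(𝓝) ≤ add(𝓜). -/
open Cardinal MeasureTheory

/-- `add(𝓝)`: the additivity of the σ-ideal of Lebesgue null subsets of ℝ. -/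
noncomputable def addNull : Cardinal :=
  sInf { c : Cardinal | ∃ F : Set (Set ℝ), #F = c ∧ (∀ A ∈ F, volume A = 0) ∧
    volume (⋃₀ F) ≠ 0 }

/-- `add(𝓜)`: the additivity of the σ-ideal of meager subsets of ℝ. -/
noncomputable def addMeager : Cardinal :=
  sInf { c : Cardinal | ∃ F : Set (Set ℝ), #F = c ∧ (∀ A ∈ F, IsMeagre A) ∧
    ¬ IsMeagre (⋃₀ F) }

/-!
Slaloms, sequences of finite sets of prescribed sizes, connect the two ideals.

Localization from null sets: let `F n k` be closed subsets of the unit interval of measure at most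
`2⁻¹ ^ n` such that any `w n` of the sets `F n 0, F n 1, …` cover all but a set of measure
`2⁻¹ ^ n`. A function `f` gives the null set of points lying in `F n (f n)` for infinitely many `n`.
If the union of the null sets given by a family of functions is null, choose a compact set `K` of
positive measure disjoint from it. By compactness, for each `f` in the family, some set `C` of
positive measure, the intersection of `K` with finitely many of the sets `F n k`, meets `F n (f n)`
in a null set for almost all `n`. For each `C` and almost all `n`, at most `w n` indices `k` satisfy
that `C` meets `F n k` in a null set, and there are only countably many sets `C`.

Meagre unions from localization: a dense open set gives a refinement map, which sends a basic open
set to a smaller one contained in the dense open set. A first slalom bounds the possible values of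
these maps, so that for each basic `U` a finite set `D` contains every position reachable from `U`
in boundedly many moves. A second slalom captures the restrictions of the refinement maps to `D`.
Applying the captured restrictions one after the other shrinks `U` to a set contained in a value of
each of them.
-/

open Filter ProbabilityTheory Set Topology unitInterval
open scoped ENNReal

section Localization

/-- The type `ι` is localizable if, for some width `w`, every family of functions `ℕ → ℕ` indexed by
`ι` is localized by one slalom of width `w`: a sequence of sets `S n` with at most `w n` elements
such that each function `f i` of the family satisfies `f i n ∈ S n` for almost all `n`. The width
may not depend on the family. -/
def IsLocalizable (ι : Type*) : Prop :=
  ∃ w : ℕ → ℕ, ∀ f : ι → ℕ → ℕ, ∃ S : ℕ → Finset ℕ, (∀ n, (S n).card ≤ w n) ∧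
    ∀ i, ∀ᶠ n in atTop, f i n ∈ S n

theorem IsLocalizable.exists_slalom_pi {ι : Type*} (hι : IsLocalizable ι) (E : Type*)
    [Countable E] :
    ∃ w : E → ℕ, ∀ (β : E → Type*) [∀ e, Countable (β e)] (f : ι → ∀ e, β e),
      ∃ S : ∀ e, Finset (β e), (∀ e, (S e).card ≤ w e) ∧
        ∀ i, ∀ᶠ e in cofinite, f i e ∈ S e := by
  classical
  obtain ⟨w, hw⟩ := hι
  obtain ⟨φ, hφ⟩ := Countable.exists_injective_nat E
  refine ⟨w ∘ φ, fun β _ f ↦ ?_⟩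
  choose ψ hψ using fun e ↦ Countable.exists_injective_nat (β e)
  obtain ⟨S, hSw, hfS⟩ := hw fun i ↦ Function.extend φ (fun e ↦ ψ e (f i e)) 0
  refine ⟨fun e ↦ (S (φ e)).preimage (ψ e) (hψ e).injOn, fun e ↦ ?_, fun i ↦ ?_⟩
  · rw [Finset.card_preimage]
    exact (Finset.card_filter_le _ _).trans (hSw (φ e))
  · have hφ_tendsto : Tendsto φ cofinite atTop := Nat.cofinite_eq_atTop ▸ hφ.tendsto_cofinite
    filter_upwards [hφ_tendsto.eventually (hfS i)] with e he
    simpa only [Finset.mem_preimage, hφ.extend_apply] using he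

theorem exists_slalom_of_forall_eventually_encard_le {α : Type*} {w : ℕ → ℕ} {T : ℕ → ℕ → Set α}
    (hT : ∀ j, ∀ᶠ n in atTop, (T j n).encard ≤ w n) :
    ∃ S : ℕ → Finset α, (∀ n, (S n).card ≤ (n + 1) * w n) ∧
      ∀ j, ∀ᶠ n in atTop, T j n ⊆ S n := by
  classical
  have hR (j n : ℕ) : ∃ R : Finset α, R.card ≤ w n ∧ ((T j n).encard ≤ w n → T j n ⊆ R) := by
    by_cases h : (T j n).encard ≤ w n
    · obtain ⟨R, hR⟩ := (finite_of_encard_le_coe h).exists_finset_coe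
      rw [← hR] at h ⊢
      exact ⟨R, by rwa [encard_coe_eq_coe_finsetCard, Nat.cast_le] at h, fun _ ↦ subset_rfl⟩
    · exact ⟨∅, by simp, fun h' ↦ (h h').elim⟩
  choose R hRcard hTR using hR
  refine ⟨fun n ↦ (Finset.range (n + 1)).biUnion fun j ↦ R j n, fun n ↦ ?_, fun j ↦ ?_⟩
  · simpa using Finset.card_biUnion_le_card_mul (Finset.range (n + 1)) _ _ fun j _ ↦ hRcard j n
  · filter_upwards [hT j, eventually_ge_atTop j] with n hn hjn
    have hRS := Finset.subset_biUnion_of_mem (fun j ↦ R j n) (Finset.mem_range_succ_iff.2 hjn)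
    exact (hTR j n hn).trans (Finset.coe_subset.2 hRS)

end Localization

section NullSets

theorem exists_measurePreserving_iIndepFun {κ : Type*} [Countable κ] {Y : κ → Type*}
    [∀ k, MeasurableSpace (Y k)] [∀ k, StandardBorelSpace (Y k)] (ν : ∀ k, Measure (Y k))
    [∀ k, IsProbabilityMeasure (ν k)] :
    ∃ X : ∀ k, I → Y k, (∀ k, MeasurePreserving (X k) volume (ν k)) ∧ iIndepFun X volume := by
  have (k : κ) : Nonempty (Y k) := (ν k).nonempty_of_neZero
  obtain ⟨φ, hφ, hmap⟩ := Measure.exists_measurable_map_eq (Measure.infinitePi ν)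
  have hX (k : κ) : MeasurePreserving (fun x ↦ φ x k) volume (ν k) :=
    (measurePreserving_eval_infinitePi ν k).comp ⟨hφ, hmap⟩
  refine ⟨fun k x ↦ φ x k, hX, ?_⟩
  rw [iIndepFun_iff_map_fun_eq_infinitePi_map fun k ↦ (hX k).measurable]
  simp only [(hX _).map_eq]
  exact hmap

theorem exists_measurableSet_measure_biInter_compl_le {δ : ℝ≥0∞} (hδ : δ ≠ 0) :
    ∃ (G : ℕ → Set I) (w : ℕ), (∀ k, MeasurableSet (G k)) ∧ (∀ k, volume (G k) ≤ δ) ∧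
      ∀ T : Finset ℕ, w ≤ T.card → volume (⋂ k ∈ T, (G k)ᶜ) ≤ δ := by
  obtain ⟨p, hp0, hpδ⟩ : ∃ p : I, 0 < p ∧ ENNReal.ofReal p ≤ δ := by
    obtain ⟨r, hr0, hr⟩ := ENNReal.lt_iff_exists_nnreal_btwn.1
      (lt_min (pos_iff_ne_zero.2 hδ) one_pos)
    have hr1 : r ≤ 1 := by exact_mod_cast (hr.trans_le (min_le_right _ _)).le
    refine ⟨⟨r, r.2, hr1⟩, Subtype.mk_lt_mk.2 (by exact_mod_cast hr0), ?_⟩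
    simpa using (hr.trans_le (min_le_left _ _)).le
  obtain ⟨w, hw⟩ : ∃ w : ℕ, ENNReal.ofReal (1 - p) ^ w ≤ δ := by
    have hp1 : ENNReal.ofReal (1 - p) < 1 := by
      rw [ENNReal.ofReal_lt_one]
      linarith [show (0 : ℝ) < p from hp0]
    exact ((ENNReal.tendsto_pow_atTop_nhds_zero_of_lt_one hp1).eventually_le_const
      (pos_iff_ne_zero.2 hδ)).exists
  obtain ⟨X, hX, hXindep⟩ := exists_measurePreserving_iIndepFun fun _ : ℕ ↦ (volume : Measure I)
  refine ⟨fun k ↦ X k ⁻¹' Iic p, w, fun k ↦ (hX k).measurable measurableSet_Iic, fun k ↦ ?_,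
    fun T hT ↦ ?_⟩
  · rwa [(hX k).measure_preimage measurableSet_Iic.nullMeasurableSet, unitInterval.volume_Iic]
  · simp only [← preimage_compl, compl_Iic]
    rw [hXindep.measure_inter_preimage_eq_mul T fun _ _ ↦ measurableSet_Ioi]
    simp only [(hX _).measure_preimage measurableSet_Ioi.nullMeasurableSet, unitInterval.volume_Ioi,
      Finset.prod_const]
    exact (pow_le_pow_right_of_le_one' (by simp [p.2.1]) hT).trans hw

theorem exists_isClosed_subset_measure_biInter_compl_le_add {X κ : Type*} [TopologicalSpace X]
    [MeasurableSpace X] [OpensMeasurableSpace X] [Countable κ] {μ : Measure X} [IsFiniteMeasure μ]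
    [μ.WeaklyRegular] {G : κ → Set X} (hG : ∀ k, MeasurableSet (G k)) {ε : ℝ≥0∞} (hε : ε ≠ 0) :
    ∃ F : κ → Set X, (∀ k, IsClosed (F k)) ∧ (∀ k, F k ⊆ G k) ∧
      ∀ T : Finset κ, μ (⋂ k ∈ T, (F k)ᶜ) ≤ μ (⋂ k ∈ T, (G k)ᶜ) + ε := by
  obtain ⟨η, hη, hsum⟩ := ENNReal.exists_pos_sum_of_countable' hε κ
  choose F hFG hF hFη using fun k ↦
    (hG k).exists_isClosed_sdiff_lt (measure_ne_top μ _) (hη k).ne'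
  refine ⟨F, hF, hFG, fun T ↦ ?_⟩
  have hcover : ⋂ k ∈ T, (F k)ᶜ ⊆ (⋂ k ∈ T, (G k)ᶜ) ∪ ⋃ k, G k \ F k := by
    intro x hx
    by_cases hxG : ∃ k ∈ T, x ∈ G k
    · obtain ⟨k, hk, hxk⟩ := hxG
      exact Or.inr (mem_iUnion.2 ⟨k, hxk, mem_iInter₂.1 hx k hk⟩)
    · push Not at hxG
      exact Or.inl (mem_iInter₂.2 hxG)
  calc μ (⋂ k ∈ T, (F k)ᶜ) ≤ μ (⋂ k ∈ T, (G k)ᶜ) + μ (⋃ k, G k \ F k) :=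
        (measure_mono hcover).trans (measure_union_le _ _)
    _ ≤ μ (⋂ k ∈ T, (G k)ᶜ) + ∑' k, η k := by
        gcongr
        exact (measure_iUnion_le _).trans (ENNReal.tsum_le_tsum fun k ↦ (hFη k).le)
    _ ≤ μ (⋂ k ∈ T, (G k)ᶜ) + ε := by gcongr

theorem exists_isClosed_measure_biInter_compl_le {δ : ℝ≥0∞} (hδ : δ ≠ 0) :
    ∃ (F : ℕ → Set I) (w : ℕ), (∀ k, IsClosed (F k)) ∧ (∀ k, volume (F k) ≤ δ) ∧
      ∀ T : Finset ℕ, w ≤ T.card → volume (⋂ k ∈ T, (F k)ᶜ) ≤ δ := by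
  have hδ2 : δ / 2 ≠ 0 := (ENNReal.half_pos hδ).ne'
  obtain ⟨G, w, hG, hGδ, hw⟩ := exists_measurableSet_measure_biInter_compl_le hδ2
  obtain ⟨F, hF, hFG, hFδ⟩ :=
    exists_isClosed_subset_measure_biInter_compl_le_add (μ := volume) hG hδ2
  refine ⟨F, w, hF, fun k ↦ ?_, fun T hT ↦ ?_⟩
  · exact (measure_mono (hFG k)).trans ((hGδ k).trans ENNReal.half_le_self)
  · calc volume (⋂ k ∈ T, (F k)ᶜ) ≤ volume (⋂ k ∈ T, (G k)ᶜ) + δ / 2 := hFδ T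
      _ ≤ δ / 2 + δ / 2 := by gcongr; exact hw T hT
      _ = δ := ENNReal.add_halves δ

theorem encard_setOf_measure_inter_eq_zero_le {X κ : Type*} [MeasurableSpace X] {μ : Measure X}
    {F : κ → Set X} {w : ℕ} {δ : ℝ≥0∞}
    (hF : ∀ T : Finset κ, w ≤ T.card → μ (⋂ k ∈ T, (F k)ᶜ) ≤ δ) {C : Set X} (hC : δ < μ C) :
    {k | μ (C ∩ F k) = 0}.encard ≤ w := by
  by_contra! hlt
  obtain ⟨t, ht_null, ht_card⟩ := exists_subset_encard_eq hlt.le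
  lift t to Finset κ using finite_of_encard_eq_coe ht_card
  rw [encard_coe_eq_coe_finsetCard, Nat.cast_inj] at ht_card
  have hnull : μ (⋃ k ∈ t, C ∩ F k) = 0 :=
    (measure_biUnion_null_iff t.countable_toSet).2 fun k hk ↦ ht_null hk
  have hcover : C ⊆ (⋂ k ∈ t, (F k)ᶜ) ∪ ⋃ k ∈ t, C ∩ F k := by
    rw [← compl_iUnion₂, ← inter_iUnion₂]
    intro x hx
    exact or_iff_not_imp_left.2 fun hxF ↦ ⟨hx, not_not.1 hxF⟩
  refine hC.not_ge ?_
  calc μ C ≤ μ (⋂ k ∈ t, (F k)ᶜ) + μ (⋃ k ∈ t, C ∩ F k) :=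
        (measure_mono hcover).trans (measure_union_le _ _)
    _ = μ (⋂ k ∈ t, (F k)ᶜ) := by rw [hnull, add_zero]
    _ ≤ δ := hF t ht_card.ge

theorem exists_finset_forall_notMem_measure_inter_eq_zero {X κ : Type*} [TopologicalSpace X]
    [MeasurableSpace X] {μ : Measure X} {K : Set X} (hK : IsCompact K) (hK0 : μ K ≠ 0)
    {F : κ → Set X} (hF : ∀ k, IsClosed (F k)) (hfin : ∀ x ∈ K, {k | x ∈ F k}.Finite) :
    ∃ P : Finset κ, μ (K ∩ ⋂ k ∈ P, F k) ≠ 0 ∧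
      ∀ k ∉ P, μ ((K ∩ ⋂ k ∈ P, F k) ∩ F k) = 0 := by
  classical
  let 𝒩 : Set (Set κ) := {N | ∀ P : Finset κ, ↑P ⊆ N → μ (K ∩ ⋂ k ∈ P, F k) ≠ 0}
  have h𝒩 : Order.IsOfFiniteCharacter 𝒩 := fun N ↦
    ⟨fun hN M hMN _ P hPM ↦ hN P (hPM.trans hMN),
      fun hN P hPN ↦ hN P hPN P.finite_toSet P subset_rfl⟩
  have hempty : ∅ ∈ 𝒩 := by
    intro P hP
    simpa [Finset.coe_eq_empty.1 (subset_empty_iff.1 hP)] using hK0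
  obtain ⟨N, -, hN, hNmax⟩ := h𝒩.exists_maximal hempty
  -- By compactness some point lies in all the sets indexed by `N`, which forces `N` to be finite.
  obtain ⟨x, hxK, hxN⟩ : (K ∩ ⋂ k : N, F k).Nonempty := by
    refine hK.inter_iInter_nonempty (fun k : N ↦ F k) (fun k ↦ hF k) fun u ↦ ?_
    have hu := hN (u.map (Function.Embedding.subtype _)) (by simp)
    simpa using nonempty_of_measure_ne_zero hu
  have hNfin : N.Finite := (hfin x hxK).subset fun k hk ↦ mem_iInter.1 hxN ⟨k, hk⟩
  lift N to Finset κ using hNfin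
  refine ⟨N, hN N subset_rfl, fun k hk ↦ ?_⟩
  by_contra hpos
  have hinsert : insert k (N : Set κ) ∈ 𝒩 := by
    intro P hP
    refine ne_of_gt ((pos_iff_ne_zero.2 hpos).trans_le (measure_mono ?_))
    rw [inter_assoc, inter_comm _ (F k), ← Finset.set_biInter_insert]
    exact inter_subset_inter_right _ (biInter_subset_biInter_left (by simpa using hP))
  exact hk (hNmax hinsert (subset_insert _ _) (mem_insert _ _))

theorem exists_isCompact_disjoint_of_measure_eq_zero {X : Type*} [TopologicalSpace X]
    [MeasurableSpace X] {μ : Measure X} [μ.InnerRegularCompactLTTop] [IsFiniteMeasure μ] [NeZero μ]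
    {A : Set X} (hA : μ A = 0) : ∃ K, IsCompact K ∧ μ K ≠ 0 ∧ Disjoint K A := by
  have hpos : 0 < μ (toMeasurable μ A)ᶜ := by
    rw [measure_compl (measurableSet_toMeasurable _ _) (measure_ne_top _ _), measure_toMeasurable,
      hA, tsub_zero]
    exact NeZero.pos _
  obtain ⟨K, hKA, hK, hK0⟩ := (measurableSet_toMeasurable _ _).compl.exists_lt_isCompact_of_ne_top
    (measure_ne_top _ _) hpos
  exact ⟨K, hK, hK0.ne',
    (subset_compl_iff_disjoint_right.1 hKA).mono_right (subset_toMeasurable μ A)⟩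

theorem isLocalizable_of_forall_measure_iUnion_eq_zero {ι X : Type*} [TopologicalSpace X]
    [MeasurableSpace X] {μ : Measure X} [μ.InnerRegularCompactLTTop] [IsFiniteMeasure μ] [NeZero μ]
    (hnull : ∀ A : ι → Set X, (∀ i, μ (A i) = 0) → μ (⋃ i, A i) = 0)
    {F : ℕ → ℕ → Set X} (hF : ∀ n k, IsClosed (F n k)) {δ : ℕ → ℝ≥0∞} (hδ : ∑' n, δ n ≠ ∞)
    (hFδ : ∀ n k, μ (F n k) ≤ δ n) {w : ℕ → ℕ}
    (hw : ∀ n (T : Finset ℕ), w n ≤ T.card → μ (⋂ k ∈ T, (F n k)ᶜ) ≤ δ n) :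
    IsLocalizable ι := by
  classical
  refine ⟨fun n ↦ (n + 1) * w n, fun f ↦ ?_⟩
  have hH (i : ι) : μ {x | ∃ᶠ n in atTop, x ∈ F n (f i n)} = 0 :=
    measure_setOfPred_frequently_eq_zero
      (ne_top_of_le_ne_top hδ (ENNReal.tsum_le_tsum fun n ↦ hFδ n (f i n)))
  obtain ⟨K, hK, hK0, hKH⟩ := exists_isCompact_disjoint_of_measure_eq_zero (hnull _ hH)
  let C (P : Finset (ℕ × ℕ)) : Set X := K ∩ ⋂ p ∈ P, F p.1 p.2
  have hC_empty : μ (C ∅) ≠ 0 := by simpa [C] using hK0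
  have : Nonempty {P // μ (C P) ≠ 0} := ⟨∅, hC_empty⟩
  obtain ⟨e, he⟩ := exists_surjective_nat {P // μ (C P) ≠ 0}
  obtain ⟨S, hScard, hS⟩ := exists_slalom_of_forall_eventually_encard_le
    (T := fun j n ↦ {k | μ (C (e j) ∩ F n k) = 0}) (w := w) fun j ↦ by
      have hlt := (ENNReal.tendsto_atTop_zero_of_tsum_ne_top hδ).eventually_lt_const
        (pos_iff_ne_zero.2 (e j).2)
      filter_upwards [hlt] with n hn
      exact encard_setOf_measure_inter_eq_zero_le (hw n) hn
  refine ⟨S, hScard, fun i ↦ ?_⟩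
  obtain ⟨P, hP0, hP⟩ := exists_finset_forall_notMem_measure_inter_eq_zero hK hK0
    (fun n ↦ hF n (f i n)) fun x hx ↦ by
      have hxH : ¬ ∃ᶠ n in atTop, x ∈ F n (f i n) :=
        fun hxf ↦ disjoint_left.1 hKH hx (mem_iUnion.2 ⟨i, hxf⟩)
      simpa only [Nat.frequently_atTop_iff_infinite, not_infinite] using hxH
  have hCP : C (P.image fun n ↦ (n, f i n)) = K ∩ ⋂ n ∈ P, F n (f i n) := by
    simp only [C, Finset.set_biInter_finset_image]
  obtain ⟨j, hj⟩ := he ⟨_, hCP ▸ hP0⟩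
  filter_upwards [hS j, Nat.cofinite_eq_atTop ▸ P.eventually_cofinite_notMem] with n hn hnP
  refine hn ?_
  rw [hj, mem_ofPred_eq, hCP]
  exact hP n hnP

theorem isLocalizable_of_forall_volume_iUnion_unitInterval_eq_zero {ι : Type*}
    (hnull : ∀ A : ι → Set I, (∀ i, volume (A i) = 0) → volume (⋃ i, A i) = 0) :
    IsLocalizable ι := by
  choose F w hF hFδ hw using fun n : ℕ ↦ exists_isClosed_measure_biInter_compl_le
    (δ := 2⁻¹ ^ n) (pow_ne_zero _ (by simp))
  refine isLocalizable_of_forall_measure_iUnion_eq_zero hnull hF ?_ hFδ hw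
  rw [ENNReal.tsum_geometric]
  simp

theorem volume_iUnion_eq_zero_of_lt_addNull {ι : Type} (hι : #ι < addNull) {A : ι → Set ℝ}
    (hA : ∀ i, volume (A i) = 0) : volume (⋃ i, A i) = 0 := by
  by_contra h
  exact (mk_range_le.trans_lt hι).not_ge
    (csInf_le' ⟨range A, rfl, forall_mem_range.2 hA, by rwa [sUnion_range]⟩)

theorem isLocalizable_of_lt_addNull {ι : Type} (hι : #ι < addNull) : IsLocalizable ι := by
  refine isLocalizable_of_forall_volume_iUnion_unitInterval_eq_zero fun A hA ↦ ?_
  rw [unitInterval.volume_apply, image_iUnion]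
  exact volume_iUnion_eq_zero_of_lt_addNull hι fun i ↦ unitInterval.volume_apply.symm.trans (hA i)

end NullSets

section MeagreSets

variable {ι : Type*}

theorem exists_finset_forall_list_exists_le {P : Type*} [Preorder P] (s : P → Finset P) (N : ℕ)
    (p : P) : ∃ D : Finset P, ∀ L : List (P → P), L.length ≤ N →
      ∃ q ≤ p, ∀ c ∈ L, (∀ r ∈ D, c r ∈ s r ∧ c r ≤ r) → ∃ r ∈ D, q ≤ c r := by
  classical
  induction N generalizing p with
  | zero =>
    exact ⟨∅, fun L hL ↦ ⟨p, le_rfl, by simp [List.length_eq_zero_iff.1 (Nat.le_zero.1 hL)]⟩⟩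
  | succ N ih =>
    choose D hD using ih
    let D' := insert p (D p ∪ (s p).biUnion D)
    have hpD' : p ∈ D' := Finset.mem_insert_self _ _
    have hDD' : D p ⊆ D' := Finset.subset_union_left.trans (Finset.subset_insert _ _)
    have hsD' {r : P} (hr : r ∈ s p) : D r ⊆ D' := (Finset.subset_biUnion_of_mem D hr).trans
      (Finset.subset_union_right.trans (Finset.subset_insert _ _))
    refine ⟨D', fun L hL ↦ ?_⟩
    rcases L with - | ⟨c, L⟩
    · exact ⟨p, le_rfl, by simp⟩
    have hLN : L.length ≤ N := by simpa using hL
    by_cases hc : c p ∈ s p ∧ c p ≤ p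
    · obtain ⟨q, hq, hqL⟩ := hD (c p) L hLN
      refine ⟨q, hq.trans hc.2, List.forall_mem_cons.2 ⟨fun _ ↦ ⟨p, hpD', hq⟩, fun d hd hd' ↦ ?_⟩⟩
      obtain ⟨r, hr, hqr⟩ := hqL d hd fun r hr ↦ hd' r (hsD' hc.1 hr)
      exact ⟨r, hsD' hc.1 hr, hqr⟩
    · obtain ⟨q, hq, hqL⟩ := hD p L hLN
      refine ⟨q, hq, List.forall_mem_cons.2 ⟨fun hc' ↦ (hc (hc' p hpD')).elim, fun d hd hd' ↦ ?_⟩⟩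
      obtain ⟨r, hr, hqr⟩ := hqL d hd fun r hr ↦ hd' r (hDD' hr)
      exact ⟨r, hDD' hr, hqr⟩

theorem exists_finset_forall_finset_exists_le {P : Type*} [Preorder P] (s : P → Finset P) (N : ℕ)
    (p : P) : ∃ D : Finset P, ∀ S : Finset (D → P), S.card ≤ N →
      ∃ q ≤ p, ∀ c ∈ S, (∀ r : D, c r ∈ s r ∧ c r ≤ r) → ∃ r, q ≤ c r := by
  obtain ⟨D, hD⟩ := exists_finset_forall_list_exists_le s N p
  refine ⟨D, fun S hS ↦ ?_⟩
  let extend (c : D → P) : P → P := Function.extend Subtype.val c id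
  have hextend (c : D → P) (r : D) : extend c r = c r := Subtype.val_injective.extend_apply c id r
  obtain ⟨q, hqp, hq⟩ := hD (S.toList.map extend) (by simpa using hS)
  refine ⟨q, hqp, fun c hc hcs ↦ ?_⟩
  obtain ⟨r, hr, hqr⟩ := hq (extend c) (List.mem_map_of_mem (Finset.mem_toList.2 hc))
    fun r hr ↦ by simpa only [hextend c ⟨r, hr⟩] using hcs ⟨r, hr⟩
  exact ⟨⟨r, hr⟩, hqr.trans_eq (hextend c ⟨r, hr⟩)⟩

theorem IsLocalizable.exists_common_refinement {K P : Type*} [Countable K] [Preorder P]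
    [Countable P] (hι : IsLocalizable ι) (h : ι → K → P → P) (hle : ∀ i k p, h i k p ≤ p) :
    ∃ g : K → P → P, (∀ k p, g k p ≤ p) ∧
      ∀ i, ∀ᶠ k in cofinite, ∀ p, ∃ r, g k p ≤ h i k r := by
  obtain ⟨w, hw⟩ := hι.exists_slalom_pi (K × P)
  obtain ⟨s, -, hs⟩ := hw (fun _ ↦ P) fun i e ↦ h i e.1 e.2
  choose D hD using fun e : K × P ↦
    exists_finset_forall_finset_exists_le (fun r ↦ s (e.1, r)) (w e) e.2
  obtain ⟨S, hScard, hS⟩ := hw (fun e ↦ D e → P) fun i e r ↦ h i e.1 r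
  choose g hgle hg using fun e ↦ hD e (S e) (hScard e)
  refine ⟨fun k p ↦ g (k, p), fun k p ↦ hgle (k, p), fun i ↦ ?_⟩
  have hfiber {Q : K × P → Prop} (hQ : ∀ᶠ e in cofinite, Q e) : ∀ᶠ k in cofinite, ∀ p, Q (k, p) :=
    (eventually_comap.1 (hQ.filter_mono (comap_cofinite_le Prod.fst))).mono fun k hk p ↦ hk _ rfl
  filter_upwards [hfiber (hs i), hfiber (hS i)] with k hks hkS p
  obtain ⟨r, hr⟩ := hg (k, p) _ (hkS p) fun r ↦ ⟨hks r, hle i k r⟩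
  exact ⟨r, hr⟩

theorem exists_seq_dense_isOpen_iInter_subset_of_mem_residual {X : Type*} [TopologicalSpace X]
    {s : Set X} (hs : s ∈ residual X) :
    ∃ O : ℕ → Set X, (∀ n, IsOpen (O n)) ∧ (∀ n, Dense (O n)) ∧ ⋂ n, O n ⊆ s := by
  obtain ⟨S, hSo, hSd, hSc, hSs⟩ := mem_residual_iff.1 hs
  obtain ⟨O, hO⟩ := (hSc.insert Set.univ).exists_eq_range (insert_nonempty _ _)
  have hOo : ∀ t ∈ range O, IsOpen t := hO ▸ forall_mem_insert.2 ⟨isOpen_univ, hSo⟩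
  have hOd : ∀ t ∈ range O, Dense t := hO ▸ forall_mem_insert.2 ⟨dense_univ, hSd⟩
  refine ⟨O, forall_mem_range.1 hOo, forall_mem_range.1 hOd, ?_⟩
  rwa [← sInter_range, ← hO, sInter_insert, univ_inter]

theorem IsLocalizable.isMeagre_iUnion {X : Type*} [TopologicalSpace X] [SecondCountableTopology X]
    (hι : IsLocalizable ι) {A : ι → Set X} (hA : ∀ i, IsMeagre (A i)) : IsMeagre (⋃ i, A i) := by
  obtain ⟨b, hbc, hbe, hb⟩ := TopologicalSpace.exists_countable_basis X
  have : Countable b := hbc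
  have hbne (u : b) : (u : Set X).Nonempty := nonempty_iff_ne_empty.2 fun hu ↦ hbe (hu ▸ u.2)
  choose O hOo hOd hOA using fun i ↦ exists_seq_dense_isOpen_iInter_subset_of_mem_residual (hA i)
  have hrefine (i : ι) (k : ℕ × ℕ) (u : b) : ∃ v : b, v ≤ u ∧ (v : Set X) ⊆ O i k.1 := by
    obtain ⟨x, hx⟩ := (hOd i k.1).inter_open_nonempty _ (hb.isOpen u.2) (hbne u)
    obtain ⟨v, hv, -, hvu⟩ :=
      hb.exists_subset_of_mem_open hx ((hb.isOpen u.2).inter (hOo i k.1))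
    exact ⟨⟨v, hv⟩, subset_inter_iff.1 hvu⟩
  choose h hle hO using hrefine
  obtain ⟨g, hgle, hg⟩ := hι.exists_common_refinement h hle
  let W (k m : ℕ) : Set X := ⋃ n ≥ m, ⋃ u, (g (k, n) u : Set X)
  have hW (k m : ℕ) : W k m ∈ residual X := by
    refine residual_of_dense_open
      (isOpen_biUnion fun n _ ↦ isOpen_iUnion fun u ↦ hb.isOpen (g (k, n) u).2)
      (hb.dense_iff.2 fun u hu _ ↦ ?_)
    obtain ⟨x, hx⟩ := hbne (g (k, m) ⟨u, hu⟩)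
    exact ⟨x, hgle _ _ hx, mem_iUnion₂.2 ⟨m, le_rfl, mem_iUnion.2 ⟨_, hx⟩⟩⟩
  have hWA : ⋂ k, ⋂ m, W k m ⊆ (⋃ i, A i)ᶜ := by
    rw [compl_iUnion]
    refine fun x hx ↦ mem_iInter.2 fun i ↦ hOA i (mem_iInter.2 fun k ↦ ?_)
    have hgk : ∀ᶠ n in atTop, ∀ u, ∃ v, g (k, n) u ≤ h i (k, n) v :=
      Nat.cofinite_eq_atTop ▸ (Prod.mk_right_injective k).tendsto_cofinite.eventually (hg i)
    obtain ⟨m, hm⟩ := eventually_atTop.1 hgk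
    obtain ⟨n, hn, hxn⟩ := mem_iUnion₂.1 (mem_iInter₂.1 hx k m)
    obtain ⟨u, hxu⟩ := mem_iUnion.1 hxn
    obtain ⟨v, hv⟩ := hm n hn u
    exact hO i (k, n) v (hv hxu)
  exact mem_of_superset (countable_iInter_mem.2 fun k ↦ countable_iInter_mem.2 (hW k)) hWA

end MeagreSets

/-- Bartoszyński's theorem: `add(𝓝) ≤ add(𝓜)`. -/
theorem addNull_le_addMeager : addNull ≤ addMeager := by
  refine le_csInf ?_ ?_
  · refine ⟨_, range (singleton : ℝ → Set ℝ), rfl, forall_mem_range.2 fun x ↦ ?_, ?_⟩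
    · exact (isClosed_singleton.isNowhereDense_iff.2 (interior_singleton x)).isMeagre
    · rw [sUnion_range, iUnion_of_singleton]
      exact not_isMeagre_of_isOpen isOpen_univ univ_nonempty
  · rintro _ ⟨F, rfl, hF, hFU⟩
    by_contra! hlt
    rw [sUnion_eq_iUnion] at hFU
    exact hFU ((isLocalizable_of_lt_addNull hlt).isMeagre_iUnion fun A ↦ hF A A.2)
end
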